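/- arXiv:math/0312148 — 4 statements merged into one kernel-verified Lean document; each statement's English description precedes it below -/
import Mathlib

section
/- Let s ≥ 1, let z be a complex number with |z| < 1, and let a₀,…,a_{2s}, b₁,…,b_{2s} be complex numbers with Re(a₀) > 0 and Re(b_i) > Re(a_i) > 0 for all i. Then J_{2s}(a₀,…,a_{2s}; b₁,…,b_{2s}; z) = [Γ(a_{2s})Γ(a_{2s−1})Γ(b_{2s}−a_{2s})Γ(b_{2s−1}−a_{2s−1}) / (Γ(b_{2s})Γ(b_{2s−1}))] · ∑_{k=0}^∞ z^k (b_{2s}−a_{2s})_k (a_{2s−1})_k (a₀)_k / (k! (b_{2s})_k (b_{2s−1})_k) · J_{2s−2}(a₀+k, a₁+k, …, a_{2s−2}+k; b₁+k, …, b_{2s−2}+k; z). -/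
open MeasureTheory

/-- Pochhammer symbol `(x)_k = x(x+1)⋯(x+k-1)`. -/
noncomputable def poch (x : ℂ) (k : ℕ) : ℂ := ∏ i ∈ Finset.range k, (x + (i : ℂ))

/-- Generalized hypergeometric series with upper parameters `α`, lower parameters `β`. -/
noncomputable def hyp (α β : List ℂ) (z : ℂ) : ℂ :=
  ∑' k : ℕ, ((α.map fun w => poch w k).prod /
    ((β.map fun w => poch w k).prod * (Nat.factorial k : ℂ))) * z ^ k

/-- Nested expression: `nestR [x₁,…,x_m] = 1 - (1 - (⋯(1 - x_m)x_{m-1}⋯))x₁`. -/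
def nestR : List ℝ → ℝ
  | [] => 1
  | t :: rest => 1 - nestR rest * t

/-- The Vasilyev-type integral `J_m(a₀,…,a_m; b₁,…,b_m; z)`. -/
noncomputable def Jint (m : ℕ) (a b : ℕ → ℂ) (z : ℂ) : ℂ :=
  ∫ x in Set.univ.pi fun _ : Fin m => Set.Ioo (0:ℝ) 1,
    (∏ i : Fin m, ((x i : ℂ) ^ (a (i.1+1) - 1) *
        ((1 - x i : ℝ) : ℂ) ^ (b (i.1+1) - a (i.1+1) - 1))) /
      ((1 - ((nestR (List.ofFn x).tail * (List.ofFn x).headI : ℝ) : ℂ) * z) ^ (a 0))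

namespace JE
open Complex

lemma coeff_eq (a : ℂ) (k : ℕ) :
    Ring.choose (a + k - 1) k = poch a k / (Nat.factorial k : ℂ) := by
  have h : Ring.choose (a + k - 1) k = Ring.multichoose a k := by
    rw [Ring.choose]; congr 1; ring
  rw [h, eq_div_iff (by exact_mod_cast Nat.factorial_ne_zero k), mul_comm, ← nsmul_eq_mul,
    Ring.factorial_nsmul_multichoose_eq_ascPochhammer, Polynomial.ascPochhammer_smeval_eq_eval]
  clear h
  induction k with
  | zero => simp [poch]
  | succ k ih => rw [ascPochhammer_succ_eval, ih]; simp [poch, Finset.prod_range_succ]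

lemma binom_hasSum (a u : ℂ) (hu : ‖u‖ < 1) :
    HasSum (fun k : ℕ => poch a k / (Nat.factorial k : ℂ) * u ^ k) (1 / (1 - u) ^ a) := by
  have h := (Complex.one_div_one_sub_cpow_hasFPowerSeriesOnBall_zero a).hasSum
    (y := u) (by simpa [enorm_eq_nnnorm, ← NNReal.coe_lt_coe] using hu)
  simpa [FormalMultilinearSeries.ofScalars, coeff_eq, mul_comm] using h

lemma binom_summable (a u : ℂ) (hu : ‖u‖ < 1) :
    Summable (fun k : ℕ => ‖poch a k / (Nat.factorial k : ℂ)‖ * ‖u‖ ^ k) := by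
  have h := (binom_hasSum a u hu).summable.norm
  simpa only [norm_mul, norm_pow] using h

lemma tail_head (l : List ℝ) : nestR l.tail * l.headI = 1 - nestR l := by
  cases l with
  | nil => simp [nestR]; rfl
  | cons t l => simp [nestR]

lemma nestR_append (l : List ℝ) (u v : ℝ) :
    nestR (l ++ [u, v]) = nestR l + (-1) ^ (l.length + 1) * (l.prod * (u * (1 - v))) := by
  induction l with
  | nil => simp [nestR]; ring
  | cons t l ih => simp [nestR, ih]; ring

lemma nestR_mem (l : List ℝ) (h : ∀ t ∈ l, t ∈ Set.Icc (0:ℝ) 1) : nestR l ∈ Set.Icc (0:ℝ) 1 := by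
  induction l with
  | nil => simp [nestR]
  | cons t l ih =>
    have h1 := ih (fun s hs => h s (by simp [hs]))
    have h2 := h t (by simp)
    simp only [nestR, Set.mem_Icc] at *
    constructor <;> nlinarith

lemma prod_le_nestR (l : List ℝ) (h : ∀ t ∈ l, t ∈ Set.Icc (0:ℝ) 1) (hl : Even l.length) :
    l.prod ≤ nestR l := by
  have h1 := nestR_mem (l ++ [1, 0]) (by
    intro t ht
    simp only [List.mem_append, List.mem_cons, List.not_mem_nil, or_false] at ht
    rcases ht with ht | rfl | rfl
    · exact h t ht
    · simp
    · simp)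
  rw [nestR_append, hl.add_one.neg_one_pow] at h1
  have := h1.1
  linarith

lemma measurable_nestR (m : ℕ) : Measurable (fun x : Fin m → ℝ => nestR (List.ofFn x)) := by
  induction m with
  | zero => simp [nestR]
  | succ m ih =>
    simp only [List.ofFn_succ, nestR]
    exact measurable_const.sub ((ih.comp (by fun_prop)).mul (by fun_prop))

/-- Lebesgue measure on the open unit interval. -/
noncomputable def nu : Measure ℝ := volume.restrict (Set.Ioo (0:ℝ) 1)

instance : IsFiniteMeasure nu := by unfold nu; infer_instance

/-- Lebesgue measure on the open unit cube. -/
noncomputable def cube (m : ℕ) : Measure (Fin m → ℝ) := Measure.pi fun _ => nu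

lemma cube_eq (m : ℕ) :
    cube m = volume.restrict (Set.univ.pi fun _ : Fin m => Set.Ioo (0:ℝ) 1) := by
  rw [cube, volume_pi, Measure.restrict_pi_pi]; rfl

lemma ae_cube (m : ℕ) : ∀ᵐ x ∂(cube m), ∀ i, x i ∈ Set.Ioo (0:ℝ) 1 := by
  rw [cube_eq]
  have hm : MeasurableSet (Set.univ.pi fun _ : Fin m => Set.Ioo (0:ℝ) 1) :=
    MeasurableSet.univ_pi fun _ => measurableSet_Ioo
  filter_upwards [ae_restrict_mem hm] with x hx i
  exact hx i trivial

lemma cube_split (m : ℕ) (f : (Fin m → ℝ) → ℂ) (g : ℝ → ℂ) :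
    ∫ x, f (fun i => x i.castSucc) * g (x (Fin.last m)) ∂(cube (m+1)) =
      (∫ x, f x ∂(cube m)) * ∫ t, g t ∂nu := by
  have h := (measurePreserving_piFinSuccAbove (fun _ : Fin (m+1) => nu) (Fin.last m))
  have h2 := h.integral_comp' (fun p : ℝ × (Fin m → ℝ) => g p.1 * f p.2)
  rw [integral_prod_mul] at h2
  rw [mul_comm]
  refine Eq.trans ?_ h2
  unfold cube
  congr 1
  ext x
  rw [mul_comm]
  congr 2
  ext i
  simp [MeasurableEquiv.piFinSuccAbove, Fin.insertNthEquiv, Fin.init]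

/-- The weight. -/
noncomputable def wt (a b : ℂ) (t : ℝ) : ℂ := (t : ℂ) ^ (a - 1) * ((1 - t : ℝ) : ℂ) ^ (b - a - 1)

lemma wt_integrable (a b : ℂ) (ha : 0 < a.re) (hb : a.re < b.re) : Integrable (wt a b) nu := by
  have h := Complex.betaIntegral_convergent (u := a) (v := b - a) ha (by simpa using hb)
  rw [intervalIntegrable_iff_integrableOn_Ioo_of_le zero_le_one] at h
  have he : wt a b = fun x : ℝ => (x : ℂ) ^ (a - 1) * (1 - (x : ℂ)) ^ (b - a - 1) := by
    ext x; simp [wt]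
  rw [he]; exact h

lemma wt_integral (a b : ℂ) (ha : 0 < a.re) (hb : a.re < b.re) :
    ∫ t, wt a b t ∂nu = Gamma a * Gamma (b - a) / Gamma b := by
  have h := Complex.Gamma_mul_Gamma_eq_betaIntegral (s := a) (t := b - a) ha (by simpa using hb)
  have hg : Gamma b ≠ 0 := Complex.Gamma_ne_zero_of_re_pos (by linarith)
  rw [h, add_sub_cancel, mul_div_cancel_left₀ _ hg, Complex.betaIntegral,
    intervalIntegral.integral_of_le zero_le_one, integral_Ioc_eq_integral_Ioo]
  simp [wt, nu]

lemma gamma_poch (a : ℂ) (ha : 0 < a.re) (k : ℕ) : Gamma (a + k) = Gamma a * poch a k := by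
  induction k with
  | zero => simp [poch]
  | succ k ih =>
    have hne : a + k ≠ 0 := by
      intro h
      have := congrArg Complex.re h
      simp at this
      have : (0:ℝ) ≤ k := k.cast_nonneg
      linarith
    push_cast
    rw [← add_assoc, Complex.Gamma_add_one _ hne, ih, poch, poch, Finset.prod_range_succ]
    ring

lemma wt_mul_pow (a b : ℂ) (t : ℝ) (ht : t ∈ Set.Ioo (0:ℝ) 1) (k : ℕ) :
    wt a b t * (t : ℂ) ^ k = wt (a + k) (b + k) t := by
  have h0 : (t : ℂ) ≠ 0 := by exact_mod_cast ht.1.ne'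
  unfold wt
  rw [show a + k - 1 = (a - 1) + k by ring, Complex.cpow_add _ _ h0, Complex.cpow_natCast,
    show b + k - (a + k) - 1 = b - a - 1 by ring]
  ring

lemma wt_mul_one_sub_pow (a b : ℂ) (t : ℝ) (ht : t ∈ Set.Ioo (0:ℝ) 1) (k : ℕ) :
    wt a b t * (((1 - t : ℝ)) : ℂ) ^ k = wt a (b + k) t := by
  have h0 : ((1 - t : ℝ) : ℂ) ≠ 0 := by
    have : 1 - t ≠ 0 := by linarith [ht.2]
    exact_mod_cast this
  unfold wt
  rw [show b + k - a - 1 = (b - a - 1) + k by ring, Complex.cpow_add _ _ h0, Complex.cpow_natCast]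
  ring

lemma Jint_eq (m : ℕ) (a b : ℕ → ℂ) (z : ℂ) :
    Jint m a b z = ∫ x, (∏ i : Fin m, wt (a (i.1+1)) (b (i.1+1)) (x i)) /
      (1 - ((1 - nestR (List.ofFn x) : ℝ) : ℂ) * z) ^ (a 0) ∂(cube m) := by
  rw [Jint, cube_eq]
  simp only [tail_head]
  rfl

lemma mul_cpow_pos (p q c : ℂ) (hp : 0 < p.re) (hq : 0 < q.re) :
    (p * q) ^ c = p ^ c * q ^ c := by
  have hp0 : p ≠ 0 := by rintro rfl; simp at hp
  have hq0 : q ≠ 0 := by rintro rfl; simp at hq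
  have h1 := abs_lt.1 (Complex.abs_arg_lt_pi_div_two_iff.2 (Or.inl hp))
  have h2 := abs_lt.1 (Complex.abs_arg_lt_pi_div_two_iff.2 (Or.inl hq))
  rw [Complex.cpow_def_of_ne_zero (mul_ne_zero hp0 hq0), Complex.cpow_def_of_ne_zero hp0,
    Complex.cpow_def_of_ne_zero hq0, Complex.log_mul hp0 hq0 ⟨by linarith, by linarith⟩,
    add_mul, Complex.exp_add]

lemma Q_re (N : ℝ) (hN : N ∈ Set.Icc (0:ℝ) 1) (z : ℂ) (hz : ‖z‖ < 1) :
    1 - ‖z‖ ≤ (1 - ((1 - N : ℝ) : ℂ) * z).re ∧ N ≤ (1 - ((1 - N : ℝ) : ℂ) * z).re := by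
  have h := (abs_le.1 (Complex.abs_re_le_norm z)).2
  have h0 := norm_nonneg z
  rw [Complex.sub_re, Complex.re_ofReal_mul, Complex.one_re]
  obtain ⟨h1, h2⟩ := hN
  constructor <;> nlinarith

lemma Q_inv_bound (z : ℂ) (hz : ‖z‖ < 1) (c : ℂ) (hc : 0 < c.re) :
    ∃ C : ℝ, 0 ≤ C ∧ ∀ N ∈ Set.Icc (0:ℝ) 1, ‖1 / (1 - ((1 - N : ℝ) : ℂ) * z) ^ c‖ ≤ C := by
  refine ⟨(1 - ‖z‖) ^ (-c.re) * Real.exp (Real.pi * |c.im|),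
    by have : 0 ≤ 1 - ‖z‖ := by linarith
       positivity, fun N hN => ?_⟩
  set Q := (1 - ((1 - N : ℝ) : ℂ) * z) with hQ
  have hre := (Q_re N hN z hz).1
  have hn : 1 - ‖z‖ ≤ ‖Q‖ := hre.trans (Complex.re_le_norm _)
  have hpos : 0 < 1 - ‖z‖ := by linarith
  have hQ0 : Q ≠ 0 := norm_pos_iff.1 (by linarith)
  rw [one_div, ← Complex.cpow_neg, Complex.norm_cpow_of_ne_zero hQ0, div_eq_mul_inv, ← Real.exp_neg]
  gcongr
  · rw [Complex.neg_re]
    exact Real.rpow_le_rpow_of_nonpos hpos hn (by linarith)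
  · calc _ ≤ |-(Q.arg * (-c).im)| := le_abs_self _
      _ = |Q.arg| * |c.im| := by rw [abs_neg, abs_mul, Complex.neg_im, abs_neg]
      _ ≤ _ := by gcongr; exact Complex.abs_arg_le_pi Q

/-- The `k`-th term of the expansion of the denominator. -/
noncomputable def trm (z c : ℂ) (N p : ℝ) (k : ℕ) : ℂ :=
  poch c k / (Nat.factorial k : ℂ) * (z * (p : ℂ)) ^ k / (1 - ((1 - N : ℝ) : ℂ) * z) ^ (c + k)

lemma trm_eq (z c : ℂ) (hz : ‖z‖ < 1) (N p : ℝ) (hN : N ∈ Set.Icc (0:ℝ) 1) (k : ℕ) :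
    trm z c N p k = (1 / (1 - ((1 - N : ℝ) : ℂ) * z) ^ c) *
      (poch c k / (Nat.factorial k : ℂ) * (z * p / (1 - ((1 - N : ℝ) : ℂ) * z)) ^ k) := by
  have hre := (Q_re N hN z hz).1
  have hQ0 : (1 - ((1 - N : ℝ) : ℂ) * z) ≠ 0 := by
    intro h; rw [h, Complex.zero_re] at hre; linarith
  rw [trm, Complex.cpow_add _ _ hQ0, Complex.cpow_natCast, div_pow]
  ring

lemma ratio_le (z : ℂ) (hz : ‖z‖ < 1) (N p : ℝ) (hN : N ∈ Set.Icc (0:ℝ) 1)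
    (hp : p ∈ Set.Icc 0 N) : ‖z * p / (1 - ((1 - N : ℝ) : ℂ) * z)‖ ≤ ‖z‖ := by
  have hre := Q_re N hN z hz
  have hn := Complex.re_le_norm (1 - ((1 - N : ℝ) : ℂ) * z)
  have h0 := norm_nonneg z
  rw [norm_div, norm_mul, Complex.norm_real, Real.norm_of_nonneg hp.1, div_le_iff₀ (by linarith)]
  gcongr
  linarith [hp.2]

lemma trm_hasSum (z c : ℂ) (hz : ‖z‖ < 1) (N p : ℝ) (hN : N ∈ Set.Icc (0:ℝ) 1)
    (hp : p ∈ Set.Icc 0 N) :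
    HasSum (trm z c N p) (1 / (1 - ((1 - (N - p) : ℝ) : ℂ) * z) ^ c) := by
  have hr := ratio_le z hz N p hN hp
  have hre := (Q_re N hN z hz).1
  have h := (binom_hasSum c _ (hr.trans_lt hz)).mul_left (1 / (1 - ((1 - N : ℝ) : ℂ) * z) ^ c)
  simp_rw [← trm_eq z c hz N p hN] at h
  have hQ0 : (1 - ((1 - N : ℝ) : ℂ) * z) ≠ 0 := by
    intro h; rw [h, Complex.zero_re] at hre; linarith
  rw [div_mul_div_comm, one_mul, ← mul_cpow_pos] at h
  · have e : (1 - ((1 - N : ℝ) : ℂ) * z) * (1 - z * p / (1 - ((1 - N : ℝ) : ℂ) * z)) =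
        1 - ((1 - (N - p) : ℝ) : ℂ) * z := by
      rw [mul_sub, mul_div_cancel₀ _ hQ0]
      push_cast
      ring
    rw [e] at h
    exact h
  · linarith
  · have := Complex.re_le_norm (z * p / (1 - ((1 - N : ℝ) : ℂ) * z))
    rw [Complex.sub_re, Complex.one_re]
    linarith

lemma trm_bound (z c : ℂ) (hz : ‖z‖ < 1) (hc : 0 < c.re) :
    ∃ C : ℝ, 0 ≤ C ∧ ∀ N ∈ Set.Icc (0:ℝ) 1, ∀ p ∈ Set.Icc 0 N, ∀ k,
      ‖trm z c N p k‖ ≤ C * (‖poch c k / (Nat.factorial k : ℂ)‖ * ‖z‖ ^ k) := by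
  obtain ⟨C, hC, h⟩ := Q_inv_bound z hz c hc
  refine ⟨C, hC, fun N hN p hp k => ?_⟩
  rw [trm_eq z c hz N p hN, norm_mul, norm_mul, norm_pow]
  gcongr
  · exact h N hN
  · exact ratio_le z hz N p hN hp

/-- truncation of a point of the cube -/
def cut {n : ℕ} (x : Fin (n+2) → ℝ) : Fin n → ℝ := fun i => x i.castSucc.castSucc

lemma ofFn_cut {n : ℕ} (x : Fin (n+2) → ℝ) :
    List.ofFn x = List.ofFn (cut x) ++ [x (Fin.last n).castSucc, x (Fin.last (n+1))] := by
  rw [List.ofFn_succ_last, List.ofFn_succ_last, List.append_assoc]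
  rfl

lemma even_case (n : ℕ) (hn : Even n) (z : ℂ) (hz : ‖z‖ < 1) (a b : ℕ → ℂ)
    (ha0 : 0 < (a 0).re)
    (hab : ∀ i : ℕ, 1 ≤ i → i ≤ n + 2 → (a i).re < (b i).re ∧ 0 < (a i).re) :
    Jint (n+2) a b z =
      (Complex.Gamma (a (n+2)) * Complex.Gamma (a (n+1)) *
        Complex.Gamma (b (n+2) - a (n+2)) * Complex.Gamma (b (n+1) - a (n+1)) /
        (Complex.Gamma (b (n+2)) * Complex.Gamma (b (n+1)))) *
      ∑' k : ℕ, z ^ k *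
        (poch (b (n+2) - a (n+2)) k * poch (a (n+1)) k * poch (a 0) k /
          ((Nat.factorial k : ℂ) * poch (b (n+2)) k * poch (b (n+1)) k)) *
        Jint n (fun i => a i + k) (fun i => b i + k) z := by
  set W : (Fin (n+2) → ℝ) → ℂ := fun x => ∏ i : Fin (n+2), wt (a (i.1+1)) (b (i.1+1)) (x i) with hW
  set N : (Fin (n+2) → ℝ) → ℝ := fun x => nestR (List.ofFn (cut x)) with hN
  set p : (Fin (n+2) → ℝ) → ℝ := fun x => (∏ i, cut x i) *
    (x (Fin.last n).castSucc * (1 - x (Fin.last (n+1)))) with hp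
  set F : ℕ → (Fin (n+2) → ℝ) → ℂ := fun k x => W x * trm z (a 0) (N x) (p x) k with hF
  have hcutm : Measurable (cut : (Fin (n+2) → ℝ) → (Fin n → ℝ)) := by unfold cut; fun_prop
  have hNm : Measurable N := (measurable_nestR n).comp hcutm
  have hpm : Measurable p := by
    simp only [hp, cut]
    fun_prop
  have hWi : Integrable W (cube (n+2)) :=
    Integrable.fintype_prod (f := fun i : Fin (n+2) => wt (a (i.1+1)) (b (i.1+1)))
      (fun i => wt_integrable _ _ (hab _ (by omega) (by omega)).2 (hab _ (by omega) (by omega)).1)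
  have hNp : ∀ x : Fin (n+2) → ℝ, (∀ i, x i ∈ Set.Ioo (0:ℝ) 1) →
      N x ∈ Set.Icc (0:ℝ) 1 ∧ p x ∈ Set.Icc 0 (N x) ∧ nestR (List.ofFn x) = N x - p x := by
    intro x hx
    have hl : ∀ t ∈ List.ofFn (cut x), t ∈ Set.Icc (0:ℝ) 1 := by
      intro t ht
      rw [List.mem_ofFn] at ht
      obtain ⟨i, rfl⟩ := ht
      exact Set.Ioo_subset_Icc_self (hx _)
    have hle := prod_le_nestR _ hl (by simpa using hn)
    have hu := hx (Fin.last n).castSucc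
    have hv := hx (Fin.last (n+1))
    have hP : 0 ≤ ∏ i, cut x i := Finset.prod_nonneg fun i _ => (hx _).1.le
    refine ⟨nestR_mem _ hl, ⟨?_, ?_⟩, ?_⟩
    · exact mul_nonneg hP (mul_nonneg hu.1.le (by linarith [hv.2]))
    · refine le_trans (mul_le_of_le_one_right hP ?_) (by simpa [List.prod_ofFn] using hle)
      exact mul_le_one₀ hu.2.le (by linarith [hv.2]) (by linarith [hv.1])
    · rw [ofFn_cut, nestR_append, List.length_ofFn, hn.add_one.neg_one_pow, List.prod_ofFn]
      simp only [hN, hp]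
      ring
  obtain ⟨C, hC, hbd⟩ := trm_bound z (a 0) hz ha0
  have hFbd : ∀ k, ∀ᵐ x ∂(cube (n+2)), ‖F k x‖ ≤
      ‖W x‖ * (C * (‖poch (a 0) k / (Nat.factorial k : ℂ)‖ * ‖z‖ ^ k)) := by
    intro k
    filter_upwards [ae_cube (n+2)] with x hx
    obtain ⟨h1, h2, -⟩ := hNp x hx
    simp only [hF, norm_mul]
    gcongr
    exact hbd _ h1 _ h2 k
  have hFi : ∀ k, Integrable (F k) (cube (n+2)) := by
    intro k
    refine Integrable.mono' (hWi.norm.mul_const _) ?_ (hFbd k)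
    refine hWi.aestronglyMeasurable.mul (Measurable.aestronglyMeasurable ?_)
    unfold trm
    fun_prop
  have hsum := hasSum_integral_of_summable_integral_norm (μ := cube (n+2)) hFi (by
    refine Summable.of_nonneg_of_le (fun k => integral_nonneg fun x => norm_nonneg _) (fun k => ?_)
      (((binom_summable (a 0) z hz).mul_left C).mul_left (∫ x, ‖W x‖ ∂(cube (n+2))))
    rw [← integral_mul_const]
    exact integral_mono_ae (hFi k).norm (hWi.norm.mul_const _) (hFbd k))
  have hJ : Jint (n+2) a b z = ∫ x, (∑' k, F k x) ∂(cube (n+2)) := by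
    rw [Jint_eq]
    refine integral_congr_ae ?_
    filter_upwards [ae_cube (n+2)] with x hx
    obtain ⟨h1, h2, h3⟩ := hNp x hx
    rw [h3, div_eq_mul_one_div]
    exact ((trm_hasSum z (a 0) hz _ _ h1 h2).mul_left (W x)).tsum_eq.symm
  rw [hJ, ← hsum.tsum_eq, ← tsum_mul_left]
  congr 1
  ext k
  obtain ⟨hb1, ha1⟩ := hab (n+1) (by omega) (by omega)
  obtain ⟨hb2, ha2⟩ := hab (n+2) (by omega) (by omega)
  have hk : (0:ℝ) ≤ k := k.cast_nonneg
  set G : (Fin n → ℝ) → ℂ := fun y =>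
    (∏ i : Fin n, wt (a (i.1+1) + k) (b (i.1+1) + k) (y i)) /
      (1 - ((1 - nestR (List.ofFn y) : ℝ) : ℂ) * z) ^ (a 0 + k) with hG
  have hFk : ∀ᵐ x ∂(cube (n+2)), F k x = (z ^ k * (poch (a 0) k / (Nat.factorial k : ℂ))) *
      ((G (cut x) * wt (a (n+1) + k) (b (n+1) + k) (x (Fin.last n).castSucc)) *
        wt (a (n+2)) (b (n+2) + k) (x (Fin.last (n+1)))) := by
    filter_upwards [ae_cube (n+2)] with x hx
    simp only [hF, hW, hG, trm]
    rw [Fin.prod_univ_castSucc, Fin.prod_univ_castSucc]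
    rw [← wt_mul_pow _ _ _ (hx _), ← wt_mul_one_sub_pow _ _ _ (hx _)]
    have : ∏ i : Fin n, wt (a (i.1+1) + k) (b (i.1+1) + k) (cut x i) =
        (∏ i : Fin n, wt (a (i.1+1)) (b (i.1+1)) (cut x i)) * (∏ i, (cut x i : ℂ)) ^ k := by
      rw [← Finset.prod_pow, ← Finset.prod_mul_distrib]
      exact Finset.prod_congr rfl fun i _ => (wt_mul_pow _ _ _ (hx _) k).symm
    rw [this]
    simp only [hp, hN, Fin.val_castSucc, Fin.val_last, cut, Complex.ofReal_mul, Complex.ofReal_prod,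
      mul_pow]
    ring
  rw [integral_congr_ae hFk, integral_const_mul]
  have hs1 := cube_split (n+1) (fun y : Fin (n+1) → ℝ => G (fun i => y i.castSucc) *
    wt (a (n+1) + k) (b (n+1) + k) (y (Fin.last n))) (wt (a (n+2)) (b (n+2) + k))
  rw [cube_split n G (wt (a (n+1) + k) (b (n+1) + k)), wt_integral _ _ (by simp; linarith)
    (by simpa using hb1), wt_integral _ _ ha2 (by simp; linarith)] at hs1
  have hs2 : ∫ x, (G (cut x) * wt (a (n+1) + k) (b (n+1) + k) (x (Fin.last n).castSucc)) *
        wt (a (n+2)) (b (n+2) + k) (x (Fin.last (n+1))) ∂(cube (n+2)) = _ := hs1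
  rw [hs2, ← Jint_eq n (fun i => a i + k) (fun i => b i + k) z,
    show b (n+2) + k - a (n+2) = (b (n+2) - a (n+2)) + k by ring,
    show b (n+1) + k - (a (n+1) + k) = b (n+1) - a (n+1) by ring,
    gamma_poch _ ha1, gamma_poch (b (n+1)) (by linarith), gamma_poch (b (n+2)) (by linarith),
    gamma_poch (b (n+2) - a (n+2)) (by simpa using hb2)]
  simp only [div_eq_mul_inv, mul_inv]
  ring

end JE

/-- the even-step recursion for the Vasilyev-type integral. -/
theorem J_even_recursion (s : ℕ) (hs : 1 ≤ s) (z : ℂ) (hz : ‖z‖ < 1) (a b : ℕ → ℂ)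
    (ha0 : 0 < (a 0).re)
    (hab : ∀ i : ℕ, 1 ≤ i → i ≤ 2*s → (a i).re < (b i).re ∧ 0 < (a i).re) :
    Jint (2*s) a b z =
      (Complex.Gamma (a (2*s)) * Complex.Gamma (a (2*s-1)) *
        Complex.Gamma (b (2*s) - a (2*s)) * Complex.Gamma (b (2*s-1) - a (2*s-1)) /
        (Complex.Gamma (b (2*s)) * Complex.Gamma (b (2*s-1)))) *
      ∑' k : ℕ, z ^ k *
        (poch (b (2*s) - a (2*s)) k * poch (a (2*s-1)) k * poch (a 0) k /
          ((Nat.factorial k : ℂ) * poch (b (2*s)) k * poch (b (2*s-1)) k)) *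
        Jint (2*s-2) (fun i => a i + k) (fun i => b i + k) z := by
  obtain ⟨s, rfl⟩ : ∃ t, s = t + 1 := ⟨s - 1, by omega⟩
  have h := JE.even_case (2*s) (even_two_mul s) z hz a b ha0 (fun i h1 h2 => hab i h1 (by omega))
  have e1 : 2 * (s + 1) = 2 * s + 2 := by ring
  have e2 : 2 * s + 2 - 1 = 2 * s + 1 := by omega
  have e3 : 2 * s + 2 - 2 = 2 * s := by omega
  rw [e1, e2, e3]
  exact h
end

section
/- Let s ≥ 1, |z| < 1, and let a₀,…,a_{2s}, b₁,…,b_{2s} be complex with Re(a₀) > 0 and Re(b_i) > Re(a_i) > 0 for all i. Then J_{2s}(a₀,…,a_{2s}; b₁,…,b_{2s}; z) = (∏_{j=1}^{2s} Γ(a_j)Γ(b_j−a_j)/Γ(b_j)) · ∑_{k₁,…,k_s ≥ 0} z^{k₁+⋯+k_s} ∏_{j=1}^{s} [(b_{2s−2j+2} − a_{2s−2j+2})_{k_j} / k_j!] · [(a_{2s−2j+1})_{k₁+⋯+k_j} / (b_{2s−2j+1})_{k₁+⋯+k_j}] · [(a_{2s−2j})_{k₁+⋯+k_j} / (b_{2s−2j+2})_{k₁+⋯+k_j}].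 -/
open MeasureTheory

namespace JEven

/-- Tail sums of a tuple. -/
def tl {s : ℕ} (k : Fin s → ℕ) (j : ℕ) : ℕ := ∑ i : Fin s, if j ≤ i.1 then k i else 0

lemma tl_zero {s : ℕ} (k : Fin s → ℕ) : tl k 0 = ∑ i, k i := by simp [tl]

lemma tl_cons_succ {s : ℕ} (q : ℕ) (k : Fin s → ℕ) (j : ℕ) :
    tl (Fin.cons q k : Fin (s+1) → ℕ) (j+1) = tl k j := by
  simp [tl, Fin.sum_univ_succ]

lemma tl_self {s : ℕ} (k : Fin s → ℕ) : tl k s = 0 := by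
  simp only [tl]
  exact Finset.sum_eq_zero fun i _ => by simp

lemma tl_step {s : ℕ} (k : Fin s → ℕ) (j : Fin s) : tl k j.1 = k j + tl k (j.1+1) := by
  simp only [tl]
  have h : ∀ i : Fin s, (if j.1 ≤ i.1 then k i else 0)
      = (if i = j then k i else 0) + (if j.1 + 1 ≤ i.1 then k i else 0) := by
    intro i
    rcases lt_trichotomy i j with h | h | h
    · have h1 : ¬ (j.1 ≤ i.1) := by have : i.1 < j.1 := h
                                    omega
      have h2 : ¬ (j.1 + 1 ≤ i.1) := by omega
      simp [h1, h2, h.ne]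
    · subst h; simp
    · have h1 : j.1 < i.1 := h
      have h2 : j.1 ≤ i.1 := by omega
      have h3 : j.1 + 1 ≤ i.1 := by omega
      simp [h2, h3, h.ne']
  simp_rw [h]
  rw [Finset.sum_add_distrib]
  simp

/-- The polynomial inside the denominator of `Jint`. -/
def nestP : ℕ → (ℕ → ℝ) → ℝ
  | 0, _ => 0
  | s+1, y => y 0 * ((1 - y 1) + y 1 * nestP s (fun i => y (i+2)))

lemma default_real : (default : ℝ) = 0 := rfl

lemma nestR_eq (l : List ℝ) : nestR l = 1 - nestR l.tail * l.headI := by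
  cases l with
  | nil => simp [nestR, default_real]
  | cons t r => simp [nestR]

lemma nestP_eq (s : ℕ) : ∀ l : List ℝ, l.length = 2*s →
    nestR l.tail * l.headI = nestP s (fun i => l.getD i 0) := by
  induction s with
  | zero => intro l hl
            have : l = [] := by simpa using hl
            subst this
            simp [nestP, default_real]
  | succ s ih =>
    intro l hl
    match l, hl with
    | u :: v :: l', hl =>
      have h := ih l' (by simp at hl; omega)
      simp only [nestP, List.tail_cons, List.headI_cons, nestR]
      have e : (fun i => (u :: v :: l').getD (i+2) 0) = fun i => l'.getD i 0 := by
        ext i; simp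
      rw [e, ← h, nestR_eq l']
      simp
      ring

lemma nestP_mem (s : ℕ) : ∀ y : ℕ → ℝ, (∀ i, y i ∈ Set.Icc (0:ℝ) 1) →
    nestP s y ∈ Set.Icc (0:ℝ) 1 := by
  induction s with
  | zero => intro y _; simp [nestP]
  | succ s ih =>
    intro y hy
    obtain ⟨h0, h1⟩ := ih (fun i => y (i+2)) (fun i => hy _)
    obtain ⟨a0, a1⟩ := hy 0
    obtain ⟨b0, b1⟩ := hy 1
    simp only [nestP]
    have c0 : 0 ≤ (1 - y 1) + y 1 * nestP s (fun i => y (i+2)) := by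
      have := mul_nonneg b0 h0; linarith
    have c1 : (1 - y 1) + y 1 * nestP s (fun i => y (i+2)) ≤ 1 := by
      have := mul_le_mul_of_nonneg_left h1 b0; linarith
    exact ⟨mul_nonneg a0 c0, mul_le_one₀ a1 c0 c1⟩

/-- The exponents of the monomials. -/
def pe {s : ℕ} (k : Fin s → ℕ) (i : ℕ) : ℕ := tl k ((i+1)/2)
def qe {s : ℕ} (k : Fin s → ℕ) (i : ℕ) : ℕ := tl k (i/2) - tl k ((i+1)/2)

lemma pe_cons {s : ℕ} (q : ℕ) (k : Fin s → ℕ) (i : ℕ) :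
    pe (Fin.cons q k : Fin (s+1) → ℕ) (i+1+1) = pe k i := by
  have : (i+1+1+1)/2 = (i+1)/2+1 := by omega
  simp only [pe, this, tl_cons_succ]

lemma qe_cons {s : ℕ} (q : ℕ) (k : Fin s → ℕ) (i : ℕ) :
    qe (Fin.cons q k : Fin (s+1) → ℕ) (i+1+1) = qe k i := by
  have : (i+1+1+1)/2 = (i+1)/2+1 := by omega
  have h : (i+1+1)/2 = i/2+1 := by omega
  simp only [qe, this, h, tl_cons_succ]

lemma sum_antidiagonalTuple_succ {M : Type*} [AddCommMonoid M] (s N : ℕ) (f : (Fin (s+1) → ℕ) → M) :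
    ∑ k ∈ Finset.Nat.antidiagonalTuple (s+1) N, f k =
      ∑ ij ∈ Finset.HasAntidiagonal.antidiagonal N, ∑ k ∈ Finset.Nat.antidiagonalTuple s ij.2,
        f (Fin.cons ij.1 k) := by
  rw [Finset.sum_sigma']
  symm
  refine Finset.sum_bij' (fun x _ => Fin.cons x.1.1 x.2)
    (fun k _ => ⟨(k 0, ∑ i, Fin.tail k i), Fin.tail k⟩) ?_ ?_ ?_ ?_ ?_
  · rintro ⟨⟨i, j⟩, k⟩ h
    simp [Finset.Nat.mem_antidiagonalTuple, Fin.sum_univ_succ] at h ⊢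
    omega
  · intro k h
    simp [Finset.Nat.mem_antidiagonalTuple, Fin.sum_univ_succ, Fin.tail] at h ⊢
    omega
  · rintro ⟨⟨i, j⟩, k⟩ h
    simp [Finset.Nat.mem_antidiagonalTuple] at h ⊢
    omega
  · intro k h
    simp
  · intro x h
    rfl

lemma nestP_pow (s : ℕ) : ∀ (y : ℕ → ℝ) (N : ℕ), nestP s y ^ N =
    ∑ k ∈ Finset.Nat.antidiagonalTuple s N, (N.factorial : ℝ) / (∏ j, ((k j).factorial : ℝ)) *
      ∏ i ∈ Finset.range (2*s), (y i ^ pe k i * (1 - y i) ^ qe k i) := by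
  induction s with
  | zero =>
    intro y N
    cases N with
    | zero => simp [nestP]
    | succ N => simp [nestP]
  | succ s ih =>
    intro y N
    rw [sum_antidiagonalTuple_succ]
    simp only [nestP]
    rw [mul_pow, (Commute.all _ _).add_pow', Finset.mul_sum]
    refine Finset.sum_congr rfl ?_
    rintro ⟨q, M⟩ hqM
    have hqM' : q + M = N := by simpa using hqM
    simp only
    rw [mul_pow, ih, Finset.mul_sum, Finset.mul_sum, Finset.smul_sum, Finset.mul_sum]
    refine Finset.sum_congr rfl fun k hk => ?_
    have hk' : ∑ i, k i = M := Finset.Nat.mem_antidiagonalTuple.1 hk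
    rw [show 2*(s+1) = 2*s+1+1 by ring, Finset.prod_range_succ', Finset.prod_range_succ']
    simp only [pe_cons, qe_cons, Fin.prod_univ_succ, Fin.cons_zero, Fin.cons_succ]
    have e0 : tl (Fin.cons q k : Fin (s+1) → ℕ) 0 = N := by
      rw [tl_zero, Fin.sum_univ_succ]; simp [hk', hqM']
    have e1 : tl (Fin.cons q k : Fin (s+1) → ℕ) 1 = M := by
      have h := tl_cons_succ q k 0
      rw [tl_zero, hk'] at h
      exact h
    have p0 : pe (Fin.cons q k : Fin (s+1) → ℕ) 0 = N := by simp [pe, e0]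
    have p1 : pe (Fin.cons q k : Fin (s+1) → ℕ) (0+1) = M := by simp [pe, e1]
    have q0 : qe (Fin.cons q k : Fin (s+1) → ℕ) 0 = 0 := by simp [qe, e0]
    have q1 : qe (Fin.cons q k : Fin (s+1) → ℕ) (0+1) = q := by simp [qe, e1, e0]; omega
    rw [p0, p1, q0, q1, nsmul_eq_mul]
    have hc : (N.choose q : ℝ) = N.factorial / (q.factorial * M.factorial) := by
      rw [← hqM', Nat.choose_symm_add, Nat.add_choose, Nat.cast_div (Nat.factorial_mul_factorial_dvd_factorial_add q M)
        (by positivity)]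
      push_cast; rfl
    have hq : (q.factorial : ℝ) ≠ 0 := by positivity
    have hM : (M.factorial : ℝ) ≠ 0 := by positivity
    have hk0 : (∏ j, ((k j).factorial : ℝ)) ≠ 0 := by positivity
    rw [hc]
    field_simp

lemma poch_succ (x : ℂ) (n : ℕ) : poch x (n+1) = poch x n * (x + n) := by
  simp [poch, Finset.prod_range_succ]

lemma Gamma_add_nat {x : ℂ} (hx : 0 < x.re) (n : ℕ) :
    Complex.Gamma (x + n) = poch x n * Complex.Gamma x := by
  induction n with
  | zero => simp [poch]
  | succ n ih =>
    have h : x + n ≠ 0 := by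
      intro h
      have := congrArg Complex.re h
      simp at this
      have h2 : (0:ℝ) ≤ n := n.cast_nonneg
      linarith
    push_cast
    rw [← add_assoc, Complex.Gamma_add_one _ h, ih, poch_succ]
    ring

lemma poch_eq_eval (x : ℂ) (n : ℕ) : poch x n = (ascPochhammer ℂ n).eval x := by
  induction n with
  | zero => simp [poch]
  | succ n ih => rw [poch_succ, ih, ascPochhammer_succ_right]; simp

lemma poch_ne_zero {x : ℂ} (hx : 0 < x.re) (n : ℕ) : poch x n ≠ 0 := by
  intro h
  have h1 := Gamma_add_nat hx n
  rw [h, zero_mul] at h1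
  refine Complex.Gamma_ne_zero_of_re_pos ?_ h1
  simp
  have h2 : (0:ℝ) ≤ n := n.cast_nonneg
  linarith

lemma choose_eq (a : ℂ) (n : ℕ) : Ring.choose (a + n - 1) n = poch a n / n.factorial := by
  have := Ring.descPochhammer_eq_factorial_smul_choose (a + n - 1) n
  rw [Polynomial.descPochhammer_smeval_eq_ascPochhammer, Polynomial.ascPochhammer_smeval_eq_eval,
    show a + n - 1 - n + 1 = a by ring, ← poch_eq_eval, nsmul_eq_mul] at this
  have hn : (n.factorial : ℂ) ≠ 0 := by exact_mod_cast n.factorial_ne_zero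
  rw [this, mul_div_cancel_left₀ _ hn]

lemma binom_hasSum (a w : ℂ) (hw : ‖w‖ < 1) :
    HasSum (fun n : ℕ => poch a n / n.factorial * w ^ n) (1 / (1 - w) ^ a) := by
  have h := Complex.one_div_one_sub_cpow_hasFPowerSeriesOnBall_zero a
  have h2 := h.hasSum (y := w) (by
    rw [mem_eball_zero_iff, ← ofReal_norm, ← ENNReal.ofReal_one]
    exact (ENNReal.ofReal_lt_ofReal_iff one_pos).2 hw)
  simpa [choose_eq, mul_comm] using h2

lemma binom_summable (a w : ℂ) (hw : ‖w‖ < 1) :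
    Summable (fun n : ℕ => ‖poch a n / n.factorial * w ^ n‖) :=
  (binom_hasSum a w hw).summable.norm

lemma beta_int {a b : ℂ} (ha : 0 < a.re) (hab : a.re < b.re) (p q : ℕ) :
    IntegrableOn (fun x : ℝ => ((x:ℂ) ^ (a - 1) * ((1 - x : ℝ) : ℂ) ^ (b - a - 1)) *
      ((x ^ p * (1 - x) ^ q : ℝ) : ℂ)) (Set.Ioo 0 1) ∧
    ∫ x in Set.Ioo (0:ℝ) 1, ((x:ℂ) ^ (a - 1) * ((1 - x : ℝ) : ℂ) ^ (b - a - 1)) *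
      ((x ^ p * (1 - x) ^ q : ℝ) : ℂ) =
    (Complex.Gamma a * Complex.Gamma (b - a) / Complex.Gamma b) *
      (poch a p * poch (b - a) q / poch b (p+q)) := by
  have hba : 0 < (b - a).re := by simp; linarith
  have hb : 0 < b.re := by linarith
  have hp : 0 < (a + p).re := by
    have h2 : (0:ℝ) ≤ p := p.cast_nonneg
    simp; linarith
  have hq : 0 < (b - a + q).re := by
    have h2 : (0:ℝ) ≤ q := q.cast_nonneg
    rw [Complex.add_re, Complex.natCast_re]; linarith
  have hcong : Set.EqOn (fun x : ℝ => (x : ℂ) ^ ((a + p) - 1) * (1 - (x : ℂ)) ^ ((b - a + q) - 1))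
      (fun x : ℝ => ((x:ℂ) ^ (a - 1) * ((1 - x : ℝ) : ℂ) ^ (b - a - 1)) *
      ((x ^ p * (1 - x) ^ q : ℝ) : ℂ)) (Set.Ioo 0 1) := by
    intro x hx
    have h1 : (x : ℂ) ≠ 0 := by exact_mod_cast hx.1.ne'
    have h2 : (1 - x : ℂ) ≠ 0 := by
      have : (1 - x : ℝ) ≠ 0 := by linarith [hx.2]
      exact_mod_cast this
    simp only
    rw [show a + p - 1 = (a - 1) + p by ring, show b - a + q - 1 = (b - a - 1) + q by ring,
      Complex.cpow_add _ _ h1, Complex.cpow_add _ _ h2, Complex.cpow_natCast, Complex.cpow_natCast]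
    push_cast
    ring
  constructor
  · refine IntegrableOn.congr_fun ?_ hcong measurableSet_Ioo
    have := Complex.betaIntegral_convergent hp hq
    rw [intervalIntegrable_iff_integrableOn_Ioo_of_le zero_le_one] at this
    exact this
  · rw [← setIntegral_congr_fun measurableSet_Ioo hcong, ← integral_Ioc_eq_integral_Ioo,
      ← intervalIntegral.integral_of_le zero_le_one]
    change Complex.betaIntegral (a+p) (b-a+q) = _
    have h := Complex.Gamma_mul_Gamma_eq_betaIntegral hp hq
    rw [show a + p + (b - a + q) = b + ((p + q : ℕ) : ℂ) by push_cast; ring,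
      Gamma_add_nat ha, Gamma_add_nat hba, Gamma_add_nat hb] at h
    have h1 := poch_ne_zero hb (p+q)
    have h2 := Complex.Gamma_ne_zero_of_re_pos hb
    field_simp
    linear_combination -h


/-- The monomial attached to a tuple. -/
def mono {s : ℕ} (k : Fin s → ℕ) (x : Fin (2*s) → ℝ) : ℝ :=
  ∏ i : Fin (2*s), (x i ^ pe k i * (1 - x i) ^ qe k i)

/-- The inner polynomial. -/
def dd {m : ℕ} (x : Fin m → ℝ) : ℝ := nestR (List.ofFn x).tail * (List.ofFn x).headI

/-- The weight. -/
noncomputable def wt (m : ℕ) (a b : ℕ → ℂ) (x : Fin m → ℝ) : ℂ :=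
  ∏ i : Fin m, ((x i : ℂ) ^ (a (i.1+1) - 1) *
        ((1 - x i : ℝ) : ℂ) ^ (b (i.1+1) - a (i.1+1) - 1))

/-- The measure. -/
noncomputable def mu (m : ℕ) : Measure (Fin m → ℝ) :=
  volume.restrict (Set.univ.pi fun _ : Fin m => Set.Ioo (0:ℝ) 1)

lemma mu_eq (m : ℕ) : mu m = Measure.pi fun _ : Fin m => volume.restrict (Set.Ioo (0:ℝ) 1) := by
  rw [mu, volume_pi, Measure.restrict_pi_pi]

lemma dd_eq {s : ℕ} (x : Fin (2*s) → ℝ) :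
    dd x = nestP s (fun i => (List.ofFn x).getD i 0) :=
  nestP_eq s _ (by simp)

lemma dd_pow {s : ℕ} (x : Fin (2*s) → ℝ) (N : ℕ) : dd x ^ N =
    ∑ k ∈ Finset.Nat.antidiagonalTuple s N, (N.factorial : ℝ) / (∏ j, ((k j).factorial : ℝ)) *
      mono k x := by
  rw [dd_eq, nestP_pow]
  refine Finset.sum_congr rfl fun k _ => ?_
  rw [Finset.prod_range, mono]
  simp

lemma dd_mem {s : ℕ} (x : Fin (2*s) → ℝ) (hx : ∀ i, x i ∈ Set.Ioo (0:ℝ) 1) :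
    dd x ∈ Set.Icc (0:ℝ) 1 := by
  rw [dd_eq]
  apply nestP_mem
  intro i
  by_cases hi : i < 2*s
  · have := hx ⟨i, hi⟩
    simp [hi]
    exact ⟨this.1.le, this.2.le⟩
  · simp [hi]

lemma mono_nonneg {s : ℕ} (k : Fin s → ℕ) (x : Fin (2*s) → ℝ) (hx : ∀ i, x i ∈ Set.Ioo (0:ℝ) 1) :
    0 ≤ mono k x := by
  refine Finset.prod_nonneg fun i _ => mul_nonneg (pow_nonneg (hx i).1.le _) (pow_nonneg ?_ _)
  linarith [(hx i).2]

lemma mono_int {s : ℕ} (a b : ℕ → ℂ)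
    (hab : ∀ i : ℕ, 1 ≤ i → i ≤ 2*s → (a i).re < (b i).re ∧ 0 < (a i).re) (k : Fin s → ℕ) :
    Integrable (fun x => wt (2*s) a b x * (mono k x : ℂ)) (mu (2*s)) ∧
    ∫ x, wt (2*s) a b x * (mono k x : ℂ) ∂(mu (2*s)) =
      ∏ i : Fin (2*s), ((Complex.Gamma (a (i.1+1)) * Complex.Gamma (b (i.1+1) - a (i.1+1)) /
        Complex.Gamma (b (i.1+1))) *
      (poch (a (i.1+1)) (pe k i) * poch (b (i.1+1) - a (i.1+1)) (qe k i) /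
        poch (b (i.1+1)) (pe k i + qe k i))) := by
  have e : (fun x => wt (2*s) a b x * (mono k x : ℂ)) = fun x => ∏ i : Fin (2*s),
    (fun (i : Fin (2*s)) (t : ℝ) => ((t:ℂ) ^ (a (i.1+1) - 1) *
      ((1 - t : ℝ) : ℂ) ^ (b (i.1+1) - a (i.1+1) - 1)) *
      ((t ^ pe k i * (1 - t) ^ qe k i : ℝ) : ℂ)) i (x i) := by
    ext x
    simp only [wt, mono]
    rw [Complex.ofReal_prod, ← Finset.prod_mul_distrib]
  have hb : ∀ i : Fin (2*s), _ := fun i => beta_int (hab (i.1+1) (by omega) (by omega)).2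
    (hab (i.1+1) (by omega) (by omega)).1 (pe k i) (qe k i)
  rw [e, mu_eq]
  constructor
  · exact Integrable.fintype_prod fun i => (hb i).1
  · refine (integral_fintype_prod_eq_prod (μ := fun _ : Fin (2*s) => volume.restrict
      (Set.Ioo (0:ℝ) 1)) (fun (i : Fin (2*s)) (t : ℝ) => ((t:ℂ) ^ (a (i.1+1) - 1) *
      ((1 - t : ℝ) : ℂ) ^ (b (i.1+1) - a (i.1+1) - 1)) *
      ((t ^ pe k i * (1 - t) ^ qe k i : ℝ) : ℂ))).trans ?_
    exact Finset.prod_congr rfl fun i _ => (hb i).2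

lemma ae_mem (m : ℕ) : ∀ᵐ x ∂(mu m), ∀ i, x i ∈ Set.Ioo (0:ℝ) 1 := by
  have h : MeasurableSet (Set.univ.pi fun _ : Fin m => Set.Ioo (0:ℝ) 1) :=
    MeasurableSet.univ_pi fun _ => measurableSet_Ioo
  filter_upwards [ae_restrict_mem h] with x hx i using hx i (Set.mem_univ i)

lemma wt_int {s : ℕ} (a b : ℕ → ℂ)
    (hab : ∀ i : ℕ, 1 ≤ i → i ≤ 2*s → (a i).re < (b i).re ∧ 0 < (a i).re) :
    Integrable (wt (2*s) a b) (mu (2*s)) := by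
  have := (mono_int (s := s) a b hab 0).1
  simpa [mono, pe, qe, tl] using this

/-- The integrated term. -/
noncomputable def gg (s : ℕ) (z : ℂ) (a b : ℕ → ℂ) (k : Fin s → ℕ) : ℂ :=
  poch (a 0) (∑ j, k j) * z ^ (∑ j, k j) / (∏ j, ((k j).factorial : ℂ)) *
    ∫ x, wt (2*s) a b x * (mono k x : ℂ) ∂(mu (2*s))

section
variable {s : ℕ} {z : ℂ} {a b : ℕ → ℂ}

lemma powint (hab : ∀ i : ℕ, 1 ≤ i → i ≤ 2*s → (a i).re < (b i).re ∧ 0 < (a i).re) (N : ℕ) :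
    Integrable (fun x => wt (2*s) a b x * (dd x : ℂ)^N) (mu (2*s)) ∧
    ∫ x, wt (2*s) a b x * (dd x : ℂ)^N ∂(mu (2*s)) =
     ∑ k ∈ Finset.Nat.antidiagonalTuple s N, (N.factorial : ℂ) / (∏ j, ((k j).factorial : ℂ)) *
      ∫ x, wt (2*s) a b x * (mono k x : ℂ) ∂(mu (2*s)) := by
  have e : (fun x => wt (2*s) a b x * (dd x : ℂ)^N) = fun x =>
      ∑ k ∈ Finset.Nat.antidiagonalTuple s N, (N.factorial : ℂ) / (∏ j, ((k j).factorial : ℂ)) *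
      (wt (2*s) a b x * (mono k x : ℂ)) := by
    ext x
    rw [← Complex.ofReal_pow, dd_pow, Complex.ofReal_sum, Finset.mul_sum]
    refine Finset.sum_congr rfl fun k _ => ?_
    push_cast
    ring
  have hi : ∀ k ∈ Finset.Nat.antidiagonalTuple s N, Integrable (fun x =>
      (N.factorial : ℂ) / (∏ j, ((k j).factorial : ℂ)) *
      (wt (2*s) a b x * (mono k x : ℂ))) (mu (2*s)) := fun k _ =>
    (mono_int a b hab k).1.const_mul _
  rw [e]
  refine ⟨integrable_finsetSum _ hi, ?_⟩
  rw [integral_finsetSum _ hi]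
  simp_rw [integral_const_mul]

lemma gg_fiber (hab : ∀ i : ℕ, 1 ≤ i → i ≤ 2*s → (a i).re < (b i).re ∧ 0 < (a i).re) (N : ℕ) :
    ∑ k ∈ Finset.Nat.antidiagonalTuple s N, gg s z a b k =
      ∫ x, wt (2*s) a b x * (poch (a 0) N / N.factorial * ((dd x : ℂ) * z)^N) ∂(mu (2*s)) := by
  have e : (fun x => wt (2*s) a b x * (poch (a 0) N / N.factorial * ((dd x : ℂ) * z)^N)) =
      fun x => (poch (a 0) N / N.factorial * z ^ N) * (wt (2*s) a b x * (dd x : ℂ)^N) := by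
    ext x; rw [mul_pow]; ring
  rw [e, integral_const_mul, (powint hab N).2, Finset.mul_sum]
  refine Finset.sum_congr rfl fun k hk => ?_
  rw [gg, Finset.Nat.mem_antidiagonalTuple.1 hk]
  have hn : (N.factorial : ℂ) ≠ 0 := by exact_mod_cast N.factorial_ne_zero
  field_simp

lemma norm_mono_ae (k : Fin s → ℕ) :
    ∀ᵐ x ∂(mu (2*s)), ‖wt (2*s) a b x * (mono k x : ℂ)‖ = ‖wt (2*s) a b x‖ * mono k x := by
  filter_upwards [ae_mem (2*s)] with x hx
  rw [norm_mul, Complex.norm_real, Real.norm_of_nonneg (mono_nonneg k x hx)]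

lemma gg_fiber_norm (hab : ∀ i : ℕ, 1 ≤ i → i ≤ 2*s → (a i).re < (b i).re ∧ 0 < (a i).re) (N : ℕ) :
    ∑ k ∈ Finset.Nat.antidiagonalTuple s N, ‖gg s z a b k‖ ≤
      ‖poch (a 0) N / N.factorial * z ^ N‖ * ∫ x, ‖wt (2*s) a b x‖ ∂(mu (2*s)) := by
  have hi : ∀ k : Fin s → ℕ, Integrable (fun x => ‖wt (2*s) a b x‖ * mono k x) (mu (2*s)) :=
    fun k => (mono_int a b hab k).1.norm.congr (norm_mono_ae k)
  have h1 : ∀ k ∈ Finset.Nat.antidiagonalTuple s N, ‖gg s z a b k‖ ≤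
      ‖poch (a 0) N / N.factorial * z ^ N‖ * ∫ x, ((N.factorial : ℝ) / (∏ j, ((k j).factorial : ℝ)))
        * (‖wt (2*s) a b x‖ * mono k x) ∂(mu (2*s)) := by
    intro k hk
    rw [gg, Finset.Nat.mem_antidiagonalTuple.1 hk, norm_mul, integral_const_mul, ← mul_assoc]
    have h2 : ‖∫ x, wt (2*s) a b x * (mono k x : ℂ) ∂(mu (2*s))‖ ≤
        ∫ x, ‖wt (2*s) a b x‖ * mono k x ∂(mu (2*s)) := by
      refine (norm_integral_le_integral_norm _).trans_eq ?_
      exact integral_congr_ae (norm_mono_ae k)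
    refine mul_le_mul ?_ h2 (norm_nonneg _) (by positivity)
    simp only [norm_div, norm_mul, norm_prod, Complex.norm_natCast]
    have hn : (N.factorial : ℝ) ≠ 0 := by positivity
    apply le_of_eq
    field_simp
  refine (Finset.sum_le_sum h1).trans ?_
  rw [← Finset.mul_sum, ← integral_finsetSum _ (fun k _ => (hi k).const_mul _)]
  refine mul_le_mul_of_nonneg_left ?_ (norm_nonneg _)
  refine integral_mono_ae (integrable_finsetSum _ (fun k _ => (hi k).const_mul _))
    (wt_int a b hab).norm ?_
  filter_upwards [ae_mem (2*s)] with x hx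
  have e : ∑ k ∈ Finset.Nat.antidiagonalTuple s N, ((N.factorial : ℝ) /
      (∏ j, ((k j).factorial : ℝ))) * (‖wt (2*s) a b x‖ * mono k x) =
      ‖wt (2*s) a b x‖ * dd x ^ N := by
    rw [dd_pow, Finset.mul_sum]
    exact Finset.sum_congr rfl fun k _ => by ring
  simp only [e]
  exact mul_le_of_le_one_right (norm_nonneg _)
    (pow_le_one₀ (dd_mem x hx).1 (dd_mem x hx).2)

lemma gg_summable (hz : ‖z‖ < 1)
    (hab : ∀ i : ℕ, 1 ≤ i → i ≤ 2*s → (a i).re < (b i).re ∧ 0 < (a i).re) :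
    Summable (gg s z a b) := by
  apply Summable.of_norm
  rw [← (Finset.Nat.sigmaAntidiagonalTupleEquivTuple s).summable_iff]
  refine (summable_sigma_of_nonneg (fun _ => norm_nonneg _)).2 ?_
  refine ⟨fun N => Summable.of_finite, ?_⟩
  refine Summable.of_nonneg_of_le (fun N => tsum_nonneg fun _ => norm_nonneg _) (fun N => ?_)
    ((binom_summable (a 0) z hz).mul_right (∫ x, ‖wt (2*s) a b x‖ ∂(mu (2*s))))
  refine le_trans (le_of_eq ?_) (gg_fiber_norm hab N)
  exact Finset.tsum_subtype (Finset.Nat.antidiagonalTuple s N) (fun k => ‖gg s z a b k‖)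

lemma gg_tsum (hz : ‖z‖ < 1)
    (hab : ∀ i : ℕ, 1 ≤ i → i ≤ 2*s → (a i).re < (b i).re ∧ 0 < (a i).re) :
    ∑' k, gg s z a b k = Jint (2*s) a b z := by
  have hs := gg_summable hz hab
  rw [← (Finset.Nat.sigmaAntidiagonalTupleEquivTuple s).tsum_eq, Summable.tsum_sigma'
    (f := fun c => gg s z a b (Finset.Nat.sigmaAntidiagonalTupleEquivTuple s c))
    (fun N => Summable.of_finite)
    ((Finset.Nat.sigmaAntidiagonalTupleEquivTuple s).summable_iff.2 hs)]
  have e : ∀ N : ℕ, (∑' c : Finset.Nat.antidiagonalTuple s N,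
      gg s z a b (Finset.Nat.sigmaAntidiagonalTupleEquivTuple s ⟨N, c⟩)) =
      ∫ x, wt (2*s) a b x * (poch (a 0) N / N.factorial * ((dd x : ℂ) * z)^N) ∂(mu (2*s)) := by
    intro N
    rw [← gg_fiber hab N]
    exact Finset.tsum_subtype (Finset.Nat.antidiagonalTuple s N) (fun k => gg s z a b k)
  simp_rw [e]
  have hi : ∀ N : ℕ, Integrable (fun x => wt (2*s) a b x *
      (poch (a 0) N / N.factorial * ((dd x : ℂ) * z)^N)) (mu (2*s)) := by
    intro N
    refine ((powint hab N).1.const_mul (poch (a 0) N / N.factorial * z ^ N)).congr ?_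
    refine Filter.Eventually.of_forall fun x => ?_
    simp only
    rw [mul_pow]; ring
  have h := hasSum_integral_of_summable_integral_norm hi ?_
  · rw [h.tsum_eq]
    change _ = ∫ x, wt (2*s) a b x / (1 - (dd x : ℂ) * z) ^ (a 0) ∂(mu (2*s))
    refine integral_congr_ae ?_
    filter_upwards [ae_mem (2*s)] with x hx
    rw [tsum_mul_left, (binom_hasSum (a 0) _ ?_).tsum_eq, mul_one_div]
    rw [norm_mul, Complex.norm_real, Real.norm_of_nonneg (dd_mem x hx).1]
    exact (mul_le_of_le_one_left (norm_nonneg _) (dd_mem x hx).2).trans_lt hz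
  · refine Summable.of_nonneg_of_le (fun N => integral_nonneg fun _ => norm_nonneg _) (fun N => ?_)
      ((binom_summable (a 0) z hz).mul_right (∫ x, ‖wt (2*s) a b x‖ ∂(mu (2*s))))
    rw [← integral_const_mul]
    refine integral_mono_ae (hi N).norm ((wt_int a b hab).norm.const_mul _) ?_
    filter_upwards [ae_mem (2*s)] with x hx
    rw [mul_pow, norm_mul, norm_mul, norm_mul, norm_mul, norm_pow, Complex.norm_real,
      Real.norm_of_nonneg (dd_mem x hx).1]
    have := pow_le_one₀ (n := N) (dd_mem x hx).1 (dd_mem x hx).2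
    calc _ = dd x ^ N * (‖poch (a 0) N / N.factorial‖ * ‖z ^ N‖ * ‖wt (2*s) a b x‖) := by ring
      _ ≤ _ := mul_le_of_le_one_left (by positivity) this

end

lemma prod_range_two {M : Type*} [CommMonoid M] (f : ℕ → M) (s : ℕ) :
    ∏ i ∈ Finset.range (2*s), f i = ∏ j ∈ Finset.range s, (f (2*j) * f (2*j+1)) := by
  induction s with
  | zero => simp
  | succ s ih =>
    rw [show 2*(s+1) = 2*s+1+1 by ring, Finset.prod_range_succ, Finset.prod_range_succ, ih,
      Finset.prod_range_succ, mul_assoc]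

lemma gg_eq (s : ℕ) (z : ℂ) (a b : ℕ → ℂ)
    (hab : ∀ i : ℕ, 1 ≤ i → i ≤ 2*s → (a i).re < (b i).re ∧ 0 < (a i).re) (k : Fin s → ℕ) :
    gg s z a b k = (∏ j ∈ Finset.Icc 1 (2*s),
        Complex.Gamma (a j) * Complex.Gamma (b j - a j) / Complex.Gamma (b j)) *
      (z ^ (∑ j, k j) * ∏ j : Fin s,
          (poch (b (2*j.1+2) - a (2*j.1+2)) (k j) / (Nat.factorial (k j) : ℂ)) *
          (poch (a (2*j.1+1)) (tl k j) / poch (b (2*j.1+1)) (tl k j)) *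
          (poch (a (2*j.1)) (tl k j) / poch (b (2*j.1+2)) (tl k j))) := by
  rw [gg, (mono_int a b hab k).2, Finset.prod_mul_distrib]
  have e1 : ∏ i : Fin (2*s), (Complex.Gamma (a (i.1+1)) * Complex.Gamma (b (i.1+1) - a (i.1+1)) /
        Complex.Gamma (b (i.1+1))) = ∏ j ∈ Finset.Icc 1 (2*s),
        Complex.Gamma (a j) * Complex.Gamma (b j - a j) / Complex.Gamma (b j) := by
    rw [← Finset.prod_range (fun i => Complex.Gamma (a (i+1)) * Complex.Gamma (b (i+1) - a (i+1)) /
        Complex.Gamma (b (i+1))), Finset.range_eq_Ico, Finset.prod_Ico_add' (fun i =>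
        Complex.Gamma (a i) * Complex.Gamma (b i - a i) / Complex.Gamma (b i)) 0 (2*s) 1]
    rfl
  have e2 : ∏ i : Fin (2*s), (poch (a (i.1+1)) (pe k i) * poch (b (i.1+1) - a (i.1+1)) (qe k i) /
        poch (b (i.1+1)) (pe k i + qe k i)) = ∏ j : Fin s,
        ((poch (a (2*j.1+1)) (tl k j) / poch (b (2*j.1+1)) (tl k j)) *
         (poch (a (2*j.1+2)) (tl k (j+1)) * poch (b (2*j.1+2) - a (2*j.1+2)) (k j) /
          poch (b (2*j.1+2)) (tl k j))) := by
    rw [← Finset.prod_range (fun i => poch (a (i+1)) (pe k i) * poch (b (i+1) - a (i+1)) (qe k i) /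
        poch (b (i+1)) (pe k i + qe k i)), prod_range_two, Finset.prod_range]
    refine Finset.prod_congr rfl fun j _ => ?_
    have h1 : (2*j.1+1)/2 = j.1 := by omega
    have h2 : (2*j.1)/2 = j.1 := by omega
    have h3 : (2*j.1+1+1)/2 = j.1+1 := by omega
    have h4 := tl_step k j
    have h5 : tl k j.1 - tl k (j.1+1) = k j := by omega
    have h6 : tl k (j.1+1) + k j = tl k j.1 := by omega
    simp only [pe, qe, h1, h2, h3, h5, h6, Nat.sub_self, Nat.add_zero]
    simp [poch]
  have e3 : poch (a 0) (∑ j, k j) * ∏ j : Fin s, poch (a (2*j.1+2)) (tl k (j+1)) =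
      ∏ j : Fin s, poch (a (2*j.1)) (tl k j) := by
    rw [← Finset.prod_range (fun j => poch (a (2*j+2)) (tl k (j+1))),
      ← Finset.prod_range (fun j => poch (a (2*j)) (tl k j))]
    have h1 := Finset.prod_range_succ (fun j => poch (a (2*j)) (tl k j)) s
    have h2 := Finset.prod_range_succ' (fun j => poch (a (2*j)) (tl k j)) s
    rw [tl_self, h2, tl_zero] at h1
    have h3 : poch (a (2*s)) 0 = 1 := by simp [poch]
    rw [h3, mul_one] at h1
    rw [← h1, mul_comm]
    rfl
  rw [e1, e2]
  simp only [Finset.prod_mul_distrib, Finset.prod_div_distrib]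
  rw [← e3]
  ring

end JEven

/-- the multisum expansion of the Vasilyev-type integral, even case. -/
theorem J_even_multisum (s : ℕ) (hs : 1 ≤ s) (z : ℂ) (hz : ‖z‖ < 1) (a b : ℕ → ℂ)
    (ha0 : 0 < (a 0).re)
    (hab : ∀ i : ℕ, 1 ≤ i → i ≤ 2*s → (a i).re < (b i).re ∧ 0 < (a i).re) :
    Jint (2*s) a b z =
      (∏ j ∈ Finset.Icc 1 (2*s),
        Complex.Gamma (a j) * Complex.Gamma (b j - a j) / Complex.Gamma (b j)) *
      ∑' k : Fin s → ℕ, z ^ (∑ j, k j) *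
        ∏ j : Fin s,
          (poch (b (2*s - 2*j.1) - a (2*s - 2*j.1)) (k j) / (Nat.factorial (k j) : ℂ)) *
          (poch (a (2*s - 2*j.1 - 1)) (∑ i ∈ Finset.Iic j, k i) /
            poch (b (2*s - 2*j.1 - 1)) (∑ i ∈ Finset.Iic j, k i)) *
          (poch (a (2*s - 2*j.1 - 2)) (∑ i ∈ Finset.Iic j, k i) /
            poch (b (2*s - 2*j.1)) (∑ i ∈ Finset.Iic j, k i)) := by
  rw [← JEven.gg_tsum hz hab, ← tsum_mul_left,
    ← (Equiv.arrowCongr (Fin.revPerm (n := s)) (Equiv.refl ℕ)).tsum_eq]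
  refine tsum_congr fun k => ?_
  rw [JEven.gg_eq s z a b hab]
  have hk : ∀ i, (Equiv.arrowCongr (Fin.revPerm (n := s)) (Equiv.refl ℕ)) k i = k i.rev := by
    intro i; simp [Equiv.arrowCongr]
  congr 2
  · simp_rw [hk]
    rw [← Equiv.sum_comp Fin.revPerm k]
    rfl
  · rw [← Equiv.prod_comp Fin.revPerm]
    refine Finset.prod_congr rfl fun j _ => ?_
    have hj := j.2
    have ht : JEven.tl ((Equiv.arrowCongr (Fin.revPerm (n := s)) (Equiv.refl ℕ)) k)
        (Fin.revPerm j).1 = ∑ i ∈ Finset.Iic j, k i := by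
      rw [JEven.tl, ← Equiv.sum_comp Fin.revPerm, ← Finset.sum_filter_add_sum_filter_not
        Finset.univ (fun i => i ≤ j)]
      have h0 : ∀ i : Fin s, ((Fin.revPerm j).1 ≤ (Fin.revPerm i).1) ↔ i ≤ j := by
        intro i
        exact Fin.rev_le_rev
      simp_rw [h0, hk]
      rw [Finset.sum_ite_of_true (by simp), Finset.sum_ite_of_false (by simp)]
      simp
      congr 1
      ext i; simp
    rw [ht, hk]
    have r0 : (Fin.revPerm j).1 = s - (j.1 + 1) := by simp [Fin.val_rev]
    have r1 : 2 * (Fin.revPerm j).1 + 2 = 2*s - 2*j.1 := by omega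
    have r2 : 2 * (Fin.revPerm j).1 + 1 = 2*s - 2*j.1 - 1 := by omega
    have r3 : 2 * (Fin.revPerm j).1 = 2*s - 2*j.1 - 2 := by omega
    rw [r1, r2, r3]
    simp
end

section
/- Let s ≥ 1, |z| < 1, and let a₀,…,a_{2s+1}, b₁,…,b_{2s+1} be complex with Re(a₀) > 0 and Re(b_i) > Re(a_i) > 0 for all i. Then J_{2s+1}(a₀,…,a_{2s+1}; b₁,…,b_{2s+1}; z) = (∏_{j=1}^{2s+1} Γ(a_j)Γ(b_j−a_j)/Γ(b_j)) · ∑_{k₁,…,k_{s+1} ≥ 0} z^{k₁+⋯+k_{s+1}} [(a_{2s+1})_{k₁}/k₁!] [(a_{2s})_{k₁}/(b_{2s+1})_{k₁}] ∏_{j=2}^{s+1} [(b_{2s−2j+4} − a_{2s−2j+4})_{k_j}/k_j!] [(a_{2s−2j+3})_{k₁+⋯+k_j}/(b_{2s−2j+3})_{k₁+⋯+k_j}] [(a_{2s−2j+2})_{k₁+⋯+k_j}/(b_{2s−2j+4})_{k₁+⋯+k_j}]. -/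
open MeasureTheory

open scoped NNReal ENNReal

/-- extension of a tuple by zero -/
noncomputable def kx {s : ℕ} (k : Fin (s+1) → ℕ) (i : ℕ) : ℕ := if h : i < s+1 then k ⟨i,h⟩ else 0

/-- partial sums -/
noncomputable def NN {s : ℕ} (k : Fin (s+1) → ℕ) (j : ℕ) : ℕ := ∑ i ∈ Finset.range (j+1), kx k i

/-- monomial -/
noncomputable def TT (u v : ℕ → ℝ≥0) {s : ℕ} (k : Fin (s+1) → ℕ) : ℝ≥0 :=
  ((Nat.factorial (k 0) : ℝ≥0))⁻¹ * ∏ j ∈ Finset.range s,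
    (u j ^ (kx k (j+1)) * ((Nat.factorial (kx k (j+1)) : ℝ≥0))⁻¹ * v j ^ NN k j)

/-- nested value -/
noncomputable def VV (u v : ℕ → ℝ≥0) : ℕ → ℝ≥0
  | 0 => 1
  | j+1 => u j + v j * VV u v j

lemma kx_snoc_lt {s : ℕ} (k : Fin (s+1) → ℕ) (q i : ℕ) (h : i < s+1) :
    kx (s := s+1) (Fin.snoc k q : Fin (s+2) → ℕ) i = kx k i := by
  have h2 : i < s+1+1 := by omega
  simp [kx, h, h2, Fin.snoc]

lemma kx_snoc_last {s : ℕ} (k : Fin (s+1) → ℕ) (q : ℕ) :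
    kx (s := s+1) (Fin.snoc k q : Fin (s+2) → ℕ) (s+1) = q := by
  simp [kx, Fin.snoc]

lemma NN_snoc_lt {s : ℕ} (k : Fin (s+1) → ℕ) (q i : ℕ) (h : i < s+1) :
    NN (s := s+1) (Fin.snoc k q : Fin (s+2) → ℕ) i = NN k i := by
  unfold NN
  refine Finset.sum_congr rfl fun j hj => kx_snoc_lt k q j ?_
  have := Finset.mem_range.1 hj
  omega

lemma NN_snoc_last {s : ℕ} (k : Fin (s+1) → ℕ) (q : ℕ) :
    NN (s := s+1) (Fin.snoc k q : Fin (s+2) → ℕ) (s+1) = NN k s + q := by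
  have := NN_snoc_lt k q s (by omega)
  unfold NN at *
  rw [Finset.sum_range_succ, this, kx_snoc_last]

lemma TT_snoc (u v : ℕ → ℝ≥0) {s : ℕ} (k : Fin (s+1) → ℕ) (q : ℕ) :
    TT u v (s := s+1) (Fin.snoc k q : Fin (s+2) → ℕ) =
      TT u v k * (u s ^ q * ((Nat.factorial q : ℝ≥0))⁻¹ * v s ^ NN k s) := by
  unfold TT
  rw [Finset.prod_range_succ, kx_snoc_last, NN_snoc_lt k q s (by omega), ← mul_assoc]
  congr 2
  refine Finset.prod_congr rfl fun j hj => ?_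
  have := Finset.mem_range.1 hj
  rw [kx_snoc_lt _ _ _ (by omega), NN_snoc_lt _ _ _ (by omega)]

lemma binom_fact (x y : ℝ≥0) (n : ℕ) :
    ∑ p ∈ Finset.HasAntidiagonal.antidiagonal n, (y ^ p.1 * ((Nat.factorial p.1 : ℝ≥0))⁻¹ *
      (x ^ p.2 * ((Nat.factorial p.2 : ℝ≥0))⁻¹)) =
      (x + y) ^ n * ((Nat.factorial n : ℝ≥0))⁻¹ := by
  rw [add_comm x y, (Commute.all y x).add_pow', Finset.sum_mul]
  refine Finset.sum_congr rfl fun p hp => ?_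
  have hp := Finset.HasAntidiagonal.mem_antidiagonal.1 hp
  have h1 : (Nat.factorial p.1 : ℝ≥0) ≠ 0 := by exact_mod_cast Nat.factorial_ne_zero _
  have h2 : (Nat.factorial p.2 : ℝ≥0) ≠ 0 := by exact_mod_cast Nat.factorial_ne_zero _
  have h3 : (Nat.factorial n : ℝ≥0) ≠ 0 := by exact_mod_cast Nat.factorial_ne_zero _
  have h4 : ((n.choose p.1 : ℕ) : ℝ≥0) * (Nat.factorial p.1) * (Nat.factorial p.2) =
      Nat.factorial n := by
    have := Nat.choose_mul_factorial_mul_factorial (n := n) (k := p.1) (by omega)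
    rw [show n - p.1 = p.2 by omega] at this
    exact_mod_cast this
  rw [nsmul_eq_mul]
  field_simp
  rw [← h4]; ring

lemma tsum_TT (u v : ℕ → ℝ≥0) (s : ℕ) : ∀ (c : ℕ → ℝ≥0∞),
    ∑' k : Fin (s+1) → ℕ, c (NN k s) * (TT u v k : ℝ≥0∞) =
    ∑' n : ℕ, c n * ((VV u v s ^ n * ((Nat.factorial n : ℝ≥0))⁻¹ : ℝ≥0) : ℝ≥0∞) := by
  induction s with
  | zero =>
    intro c
    rw [← (Equiv.funUnique (Fin 1) ℕ).symm.tsum_eq]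
    refine tsum_congr fun n => ?_
    simp [NN, kx, TT, VV]
  | succ s ih =>
    intro c
    rw [← (Fin.snocEquiv (fun _ : Fin (s+2) => ℕ)).tsum_eq]
    rw [ENNReal.tsum_prod', ENNReal.tsum_comm]
    have : ∀ (k : Fin (s+1) → ℕ), ∑' q : ℕ,
        c (NN (s := s+1) (Fin.snocEquiv (fun _ : Fin (s+2) => ℕ) (q, k)) (s+1)) *
          (TT u v (s := s+1) (Fin.snocEquiv (fun _ : Fin (s+2) => ℕ) (q, k)) : ℝ≥0∞) =
        (fun p => ∑' q : ℕ, c (p + q) *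
          ((u s ^ q * ((Nat.factorial q : ℝ≥0))⁻¹ * v s ^ p : ℝ≥0) : ℝ≥0∞)) (NN k s) *
            (TT u v k : ℝ≥0∞) := by
      intro k
      simp only
      rw [← ENNReal.tsum_mul_right]
      refine tsum_congr fun q => ?_
      have h1 := NN_snoc_last k q
      have h2 := TT_snoc u v k q
      simp only [Fin.snocEquiv, Equiv.coe_fn_mk]
      rw [h1, h2]
      push_cast
      ring
    rw [tsum_congr this]
    refine (ih (fun p => ∑' q : ℕ, c (p + q) *
          ((u s ^ q * ((Nat.factorial q : ℝ≥0))⁻¹ * v s ^ p : ℝ≥0) : ℝ≥0∞))).trans ?_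
    simp only [← ENNReal.tsum_mul_right]
    rw [← ENNReal.tsum_prod (f := fun p q => c (p + q) *
          ((u s ^ q * ((Nat.factorial q : ℝ≥0))⁻¹ * v s ^ p : ℝ≥0) : ℝ≥0∞) *
          ((VV u v s ^ p * ((Nat.factorial p : ℝ≥0))⁻¹ : ℝ≥0) : ℝ≥0∞)),
      ← Finset.HasAntidiagonal.sigmaAntidiagonalEquivProd.tsum_eq, ENNReal.tsum_sigma']
    refine tsum_congr fun n => ?_
    rw [tsum_fintype, VV, ← binom_fact, ENNReal.ofNNReal_finsetSum, Finset.mul_sum,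
      ← Finset.sum_coe_sort (Finset.HasAntidiagonal.antidiagonal n)]
    refine Finset.sum_congr rfl fun p _ => ?_
    have hp := Finset.HasAntidiagonal.mem_antidiagonal.1 p.2
    simp only [Finset.HasAntidiagonal.sigmaAntidiagonalEquivProd_apply]
    rw [hp, mul_assoc, ← ENNReal.coe_mul]
    congr 2
    ring

lemma tsum_TT_complex (u v : ℕ → ℝ≥0) (s : ℕ) (c : ℕ → ℂ)
    (h : ∑' n : ℕ, ‖c n‖ₑ * ((VV u v s ^ n * ((Nat.factorial n : ℝ≥0))⁻¹ : ℝ≥0) : ℝ≥0∞) ≠ ∞) :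
    ∑' k : Fin (s+1) → ℕ, c (NN k s) * ((TT u v k : ℝ) : ℂ) =
    ∑' n : ℕ, c n * ((VV u v s ^ n * ((Nat.factorial n : ℝ≥0))⁻¹ : ℝ≥0) : ℝ) := by
  have hs : Summable fun k : Fin (s+1) → ℕ => c (NN k s) * ((TT u v k : ℝ) : ℂ) := by
    apply Summable.of_enorm
    rw [← tsum_TT] at h
    convert h using 4 with k
    rw [enorm_mul]
    congr 1
    simp [enorm_eq_nnnorm]
  rw [← (Equiv.sigmaFiberEquiv (fun k : Fin (s+1) → ℕ => NN k s)).tsum_eq]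
  have hs' := (Equiv.sigmaFiberEquiv (fun k : Fin (s+1) → ℕ => NN k s)).summable_iff.2 hs
  refine hs'.tsum_sigma.trans ?_
  refine tsum_congr fun n => ?_
  have : ∀ x : {k : Fin (s+1) → ℕ // NN k s = n},
    c (NN (Equiv.sigmaFiberEquiv (fun k : Fin (s+1) → ℕ => NN k s) ⟨n, x⟩) s) *
      ((TT u v (Equiv.sigmaFiberEquiv (fun k : Fin (s+1) → ℕ => NN k s) ⟨n, x⟩) : ℝ) : ℂ)
      = c n * ((TT u v x.1 : ℝ) : ℂ) := by
    rintro ⟨k, rfl⟩; rfl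
  refine (tsum_congr this).trans ?_
  rw [tsum_mul_left]
  congr 1
  rw [← Complex.ofReal_tsum, ← NNReal.coe_tsum]
  congr 2
  have key := tsum_TT u v s (Pi.single n 1)
  rw [tsum_eq_single (f := fun m => (Pi.single n 1 : ℕ → ℝ≥0∞) m * _) n
    (by intro m hm; simp [hm])] at key
  have h3 : ∑' (k : Fin (s + 1) → ℕ), (Pi.single n 1 : ℕ → ℝ≥0∞) (NN k s) * (TT u v k : ℝ≥0∞) =
      ∑' x : {k : Fin (s+1) → ℕ // NN k s = n}, (TT u v x.1 : ℝ≥0∞) := by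
    refine Eq.trans ?_ (tsum_subtype {k : Fin (s+1) → ℕ | NN k s = n} (fun k => (TT u v k : ℝ≥0∞))).symm
    refine tsum_congr fun k => ?_
    by_cases hk : NN k s = n
    · simp [hk]
    · simp [hk]
  rw [h3] at key
  simp only [Pi.single_eq_same, one_mul] at key
  have hne : ∑' x : {k : Fin (s+1) → ℕ // NN k s = n}, (TT u v x.1 : ℝ≥0∞) ≠ ∞ := by
    rw [key]; exact ENNReal.coe_ne_top
  rw [← ENNReal.coe_tsum (ENNReal.tsum_coe_ne_top_iff_summable.1 hne)] at key
  exact_mod_cast key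

lemma poch_eq (x : ℂ) (n : ℕ) : Ring.choose (x + n - 1) n = poch x n / (Nat.factorial n : ℂ) := by
  rw [← Ring.multichoose_eq]
  have h3 : (Nat.factorial n : ℂ) ≠ 0 := by exact_mod_cast Nat.factorial_ne_zero _
  rw [eq_div_iff h3, mul_comm, ← nsmul_eq_mul, Ring.factorial_nsmul_multichoose_eq_ascPochhammer,
    Polynomial.ascPochhammer_smeval_eq_eval]
  unfold poch
  induction n with
  | zero => simp
  | succ n ih => rw [ascPochhammer_succ_eval, Finset.prod_range_succ, ih (by exact_mod_cast Nat.factorial_ne_zero _)]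

lemma binom_hasSum (x y : ℂ) (hy : ‖y‖ < 1) :
    HasSum (fun n : ℕ => poch x n / (Nat.factorial n : ℂ) * y ^ n) (1 / (1 - y) ^ x) := by
  have := (Complex.one_div_one_sub_cpow_hasFPowerSeriesOnBall_zero x).hasSum (y := y)
    (by simpa [enorm_eq_nnnorm] using! hy)
  simpa [poch_eq, mul_comm] using this

lemma Gamma_poch (x : ℂ) (hx : 0 < x.re) (n : ℕ) :
    Complex.Gamma (x + n) = poch x n * Complex.Gamma x := by
  induction n with
  | zero => simp [poch]
  | succ n ih =>
    have : x + n ≠ 0 := by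
      intro h
      have := congrArg Complex.re h
      simp at this
      linarith [(Nat.cast_nonneg n : (0:ℝ) ≤ n)]
    push_cast
    rw [← add_assoc, Complex.Gamma_add_one _ this, ih]
    simp only [poch, Finset.prod_range_succ]
    ring

lemma prod_split {M : Type*} [CommMonoid M] (f : ℕ → M) (s : ℕ) :
    ∏ i ∈ Finset.range (2*s+1), f (i+1) =
      f (2*s+1) * ∏ j ∈ Finset.range s, (f (2*s-2*j) * f (2*s-2*j-1)) := by
  rw [Finset.prod_range_succ, mul_comm]
  congr 1
  have : ∀ s, ∏ i ∈ Finset.range (2*s), f (i+1) =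
      ∏ j ∈ Finset.range s, (f (2*j+2) * f (2*j+1)) := by
    intro s
    induction s with
    | zero => simp
    | succ n ih =>
      rw [Finset.prod_range_succ, ← ih, show 2*(n+1) = 2*n+1+1 by ring,
        Finset.prod_range_succ, Finset.prod_range_succ, mul_assoc, mul_comm (f _) (f _)]
  rw [this, ← Finset.prod_range_reflect]
  refine Finset.prod_congr rfl fun j hj => ?_
  have := Finset.mem_range.1 hj
  congr 2 <;> omega

lemma telescope {M : Type*} [CommMonoid M] (A : ℕ → M) (s : ℕ) :
    A 0 * ∏ j ∈ Finset.range s, A (j+1) = A s * ∏ j ∈ Finset.range s, A j := by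
  rw [mul_comm, ← Finset.prod_range_succ', Finset.prod_range_succ, mul_comm]

/-- `u` sequence -/
noncomputable def uu (s : ℕ) (X : ℕ → ℝ) (j : ℕ) : ℝ≥0 := (1 - X (2*s-2*j)).toNNReal

/-- `v` sequence -/
noncomputable def vv (s : ℕ) (X : ℕ → ℝ) (j : ℕ) : ℝ≥0 :=
  (X (2*s-2*j) * X (2*s-2*j+1)).toNNReal

lemma coe_uu (s : ℕ) (X : ℕ → ℝ) (hX : ∀ i, 0 ≤ X i ∧ X i ≤ 1) (j : ℕ) :
    (uu s X j : ℝ) = 1 - X (2*s-2*j) :=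
  Real.coe_toNNReal _ (by linarith [(hX (2*s-2*j)).2])

lemma coe_vv (s : ℕ) (X : ℕ → ℝ) (hX : ∀ i, 0 ≤ X i ∧ X i ≤ 1) (j : ℕ) :
    (vv s X j : ℝ) = X (2*s-2*j) * X (2*s-2*j+1) :=
  Real.coe_toNNReal _ (mul_nonneg (hX _).1 (hX _).1)

lemma nest_eq (s : ℕ) (X : ℕ → ℝ) (hX : ∀ i, 0 ≤ X i ∧ X i ≤ 1) (j : ℕ) (hj : j ≤ s) :
    nestR ((List.range' (2*s-2*j+2) (2*j)).map X) = (VV (uu s X) (vv s X) j : ℝ) := by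
  induction j with
  | zero => simp [nestR, VV]
  | succ j ih =>
    rw [show 2*(j+1) = 2*j+1+1 by ring, List.range'_succ, List.range'_succ]
    simp only [List.map_cons, nestR, VV]
    rw [show 2*s - (2*j+1+1)+2+1+1 = 2*s-2*j+2 by omega, ih (by omega)]
    push_cast
    rw [coe_uu s X hX, coe_vv s X hX, show 2*s - (2*j+1+1)+2 = 2*s-2*j by omega]
    ring

lemma VV_le_one (s : ℕ) (X : ℕ → ℝ) (hX : ∀ i, 0 ≤ X i ∧ X i ≤ 1) (j : ℕ) :
    VV (uu s X) (vv s X) j ≤ 1 := by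
  induction j with
  | zero => simp [VV]
  | succ j ih =>
    rw [← NNReal.coe_le_coe] at *
    simp only [VV]
    push_cast at *
    rw [coe_uu s X hX, coe_vv s X hX]
    have h1 := hX (2*s-2*j)
    have h2 := hX (2*s-2*j+1)
    have h3 : X (2*s-2*j+1) * (VV (uu s X) (vv s X) j : ℝ) ≤ 1 :=
      mul_le_one₀ h2.2 (NNReal.coe_nonneg _) ih
    nlinarith [mul_le_mul_of_nonneg_left h3 h1.1]

/-- exponents of `x_i` -/
noncomputable def PP {s : ℕ} (k : Fin (s+1) → ℕ) (i : ℕ) : ℕ := NN k ((2*s+1-i)/2)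

/-- exponents of `1 - x_i` -/
noncomputable def QQ {s : ℕ} (k : Fin (s+1) → ℕ) (i : ℕ) : ℕ :=
  if Even i then kx k ((2*s-i)/2+1) else 0

lemma PP_top {s : ℕ} (k : Fin (s+1) → ℕ) : PP k (2*s+1) = NN k 0 := by simp [PP]

lemma QQ_top {s : ℕ} (k : Fin (s+1) → ℕ) : QQ k (2*s+1) = 0 := by simp [QQ]

lemma PP_even {s : ℕ} (k : Fin (s+1) → ℕ) (j : ℕ) (hj : j < s) :
    PP k (2*s-2*j) = NN k j := by
  simp only [PP]; congr 1; omega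

lemma PP_odd {s : ℕ} (k : Fin (s+1) → ℕ) (j : ℕ) (hj : j < s) :
    PP k (2*s-2*j-1) = NN k (j+1) := by
  simp only [PP]; congr 1; omega

lemma QQ_even {s : ℕ} (k : Fin (s+1) → ℕ) (j : ℕ) (hj : j < s) :
    QQ k (2*s-2*j) = kx k (j+1) := by
  have : Even (2*s-2*j) := ⟨s-j, by omega⟩
  simp only [QQ, this, if_true]; congr 1; omega

lemma QQ_odd {s : ℕ} (k : Fin (s+1) → ℕ) (j : ℕ) (hj : j < s) :
    QQ k (2*s-2*j-1) = 0 := by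
  have : ¬ Even (2*s-2*j-1) := by
    rw [Nat.not_even_iff_odd]; exact ⟨s-j-1, by omega⟩
  simp only [QQ, this, if_false]

/-- product of factorials -/
noncomputable def FF {s : ℕ} (k : Fin (s+1) → ℕ) : ℝ :=
  ((Nat.factorial (k 0) : ℝ))⁻¹ * ∏ j ∈ Finset.range s, ((Nat.factorial (kx k (j+1)) : ℝ))⁻¹

lemma monomial_eq (s : ℕ) (X : ℕ → ℝ) (hX : ∀ i, 0 ≤ X i ∧ X i ≤ 1) (k : Fin (s+1) → ℕ) :
    FF k * ∏ i ∈ Finset.range (2*s+1), (X (i+1) ^ PP k (i+1) * (1 - X (i+1)) ^ QQ k (i+1)) =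
      X 1 ^ NN k s * (TT (uu s X) (vv s X) k : ℝ) := by
  rw [prod_split (fun i => X i ^ PP k i * (1 - X i) ^ QQ k i)]
  have h1 : ∀ j ∈ Finset.range s,
      (X (2*s-2*j) ^ PP k (2*s-2*j) * (1 - X (2*s-2*j)) ^ QQ k (2*s-2*j)) *
      (X (2*s-2*j-1) ^ PP k (2*s-2*j-1) * (1 - X (2*s-2*j-1)) ^ QQ k (2*s-2*j-1)) =
      (X (2*s-2*j) ^ NN k j * (1 - X (2*s-2*j)) ^ kx k (j+1)) *
        (fun j => X (2*s-2*j+1) ^ NN k j) (j+1) := by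
    intro j hj
    have hj := Finset.mem_range.1 hj
    simp only
    rw [PP_even k j hj, PP_odd k j hj, QQ_even k j hj, QQ_odd k j hj,
      show 2*s-2*(j+1)+1 = 2*s-2*j-1 by omega]
    ring
  rw [Finset.prod_congr rfl h1, PP_top, QQ_top, Finset.prod_mul_distrib]
  have h2 := telescope (fun j => X (2*s-2*j+1) ^ NN k j) s
  simp only [Nat.mul_zero, Nat.sub_zero, Nat.sub_self, zero_add] at h2
  have h3 : (TT (uu s X) (vv s X) k : ℝ) = FF k *
      (∏ j ∈ Finset.range s, (X (2*s-2*j) ^ NN k j * (1 - X (2*s-2*j)) ^ kx k (j+1))) *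
      ∏ j ∈ Finset.range s, X (2*s-2*j+1) ^ NN k j := by
    simp only [TT, FF]
    push_cast
    rw [mul_assoc, mul_assoc, ← Finset.prod_mul_distrib, ← Finset.prod_mul_distrib]
    congr 1
    refine Finset.prod_congr rfl fun j _ => ?_
    rw [coe_uu s X hX, coe_vv s X hX, mul_pow]
    ring
  rw [h3]
  simp only [pow_zero, mul_one]
  linear_combination (FF k *
      (∏ j ∈ Finset.range s, (X (2*s-2*j) ^ NN k j * (1 - X (2*s-2*j)) ^ kx k (j+1)))) * h2

lemma NN_zero {s : ℕ} (k : Fin (s+1) → ℕ) : NN k 0 = k 0 := by simp [NN, kx]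

lemma poch_prod_eq (s : ℕ) (a b : ℕ → ℂ) (k : Fin (s+1) → ℕ) :
    poch (a 0) (NN k s) * (FF k : ℂ) * ∏ i ∈ Finset.range (2*s+1),
      (poch (a (i+1)) (PP k (i+1)) * poch (b (i+1) - a (i+1)) (QQ k (i+1)) /
        poch (b (i+1)) (PP k (i+1) + QQ k (i+1))) =
    ((poch (a (2*s+1)) (k 0) / (Nat.factorial (k 0) : ℂ)) *
          (poch (a (2*s)) (k 0) / poch (b (2*s+1)) (k 0))) *
        ∏ j ∈ Finset.range s,
          ((poch (b (2*s - 2*j) - a (2*s - 2*j)) (kx k (j+1)) /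
            (Nat.factorial (kx k (j+1)) : ℂ)) *
          (poch (a (2*s - 2*j - 1)) (NN k (j+1)) /
            poch (b (2*s - 2*j - 1)) (NN k (j+1))) *
          (poch (a (2*s - 2*j - 2)) (NN k (j+1)) /
            poch (b (2*s - 2*j)) (NN k (j+1)))) := by
  rw [prod_split (fun i => poch (a i) (PP k i) * poch (b i - a i) (QQ k i) /
        poch (b i) (PP k i + QQ k i))]
  have hz : ∀ x, poch x 0 = 1 := fun x => by simp [poch]
  have h2 := telescope (fun j => poch (a (2*s-2*j)) (NN k j)) s
  simp only [Nat.mul_zero, Nat.sub_zero, Nat.sub_self] at h2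
  have h1 : ∀ j ∈ Finset.range s,
      (poch (a (2*s-2*j)) (PP k (2*s-2*j)) * poch (b (2*s-2*j) - a (2*s-2*j)) (QQ k (2*s-2*j)) /
        poch (b (2*s-2*j)) (PP k (2*s-2*j) + QQ k (2*s-2*j))) *
      (poch (a (2*s-2*j-1)) (PP k (2*s-2*j-1)) *
        poch (b (2*s-2*j-1) - a (2*s-2*j-1)) (QQ k (2*s-2*j-1)) /
        poch (b (2*s-2*j-1)) (PP k (2*s-2*j-1) + QQ k (2*s-2*j-1))) =
      (poch (b (2*s-2*j) - a (2*s-2*j)) (kx k (j+1)) *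
        (poch (a (2*s - 2*j - 1)) (NN k (j+1)) / poch (b (2*s - 2*j - 1)) (NN k (j+1))) /
        poch (b (2*s - 2*j)) (NN k (j+1))) * poch (a (2*s-2*j)) (NN k j) := by
    intro j hj
    have hj := Finset.mem_range.1 hj
    rw [PP_even k j hj, PP_odd k j hj, QQ_even k j hj, QQ_odd k j hj, hz,
      show NN k j + kx k (j+1) = NN k (j+1) from (Finset.sum_range_succ _ _).symm, add_zero]
    ring
  have h4 : ∀ j ∈ Finset.range s, ((poch (b (2*s - 2*j) - a (2*s - 2*j)) (kx k (j+1)) /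
            (Nat.factorial (kx k (j+1)) : ℂ)) *
          (poch (a (2*s - 2*j - 1)) (NN k (j+1)) /
            poch (b (2*s - 2*j - 1)) (NN k (j+1))) *
          (poch (a (2*s - 2*j - 2)) (NN k (j+1)) /
            poch (b (2*s - 2*j)) (NN k (j+1)))) =
      (Nat.factorial (kx k (j+1)) : ℂ)⁻¹ * (poch (b (2*s-2*j) - a (2*s-2*j)) (kx k (j+1)) *
        (poch (a (2*s - 2*j - 1)) (NN k (j+1)) / poch (b (2*s - 2*j - 1)) (NN k (j+1))) /
        poch (b (2*s - 2*j)) (NN k (j+1))) * poch (a (2*s-2*(j+1))) (NN k (j+1)) := by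
    intro j hj
    rw [show 2*s-2*(j+1) = 2*s-2*j-2 by omega]
    ring
  rw [Finset.prod_congr rfl h1, Finset.prod_congr rfl h4, PP_top, QQ_top, hz, NN_zero, add_zero,
    Finset.prod_mul_distrib, Finset.prod_mul_distrib, Finset.prod_mul_distrib]
  rw [NN_zero] at h2
  simp only [FF]
  push_cast
  set A := ∏ j ∈ Finset.range s, (poch (b (2*s-2*j) - a (2*s-2*j)) (kx k (j+1)) *
        (poch (a (2*s - 2*j - 1)) (NN k (j+1)) / poch (b (2*s - 2*j - 1)) (NN k (j+1))) /
        poch (b (2*s - 2*j)) (NN k (j+1)))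
  set B := ∏ j ∈ Finset.range s, (Nat.factorial (kx k (j+1)) : ℂ)⁻¹
  linear_combination (-(poch (a (2*s+1)) (k 0) / (Nat.factorial (k 0) : ℂ) /
    poch (b (2*s+1)) (k 0) * B * A)) * h2

lemma beta_int (p q : ℂ) (hp : 0 < p.re) (hq : 0 < q.re) :
    IntegrableOn (fun x : ℝ => (x : ℂ) ^ (p - 1) * ((1 - x : ℝ) : ℂ) ^ (q - 1))
      (Set.Ioo (0:ℝ) 1) ∧
    ∫ x in Set.Ioo (0:ℝ) 1, (x : ℂ) ^ (p - 1) * ((1 - x : ℝ) : ℂ) ^ (q - 1) =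
      Complex.Gamma p * Complex.Gamma q / Complex.Gamma (p + q) := by
  have h := Complex.betaIntegral_convergent hp hq
  rw [intervalIntegrable_iff_integrableOn_Ioo_of_le zero_le_one] at h
  have h2 := Complex.Gamma_mul_Gamma_eq_betaIntegral hp hq
  rw [Complex.betaIntegral, intervalIntegral.integral_of_le zero_le_one,
    integral_Ioc_eq_integral_Ioo] at h2
  have h0 : Complex.Gamma (p + q) ≠ 0 := Complex.Gamma_ne_zero_of_re_pos (by simp; linarith)
  push_cast
  exact ⟨h, by rw [h2]; field_simp⟩

lemma beta_poch (a b : ℂ) (ha : 0 < a.re) (hb : a.re < b.re) (P Q : ℕ) :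
    Complex.Gamma (a + P) * Complex.Gamma (b - a + Q) / Complex.Gamma (a + P + (b - a + Q)) =
    (Complex.Gamma a * Complex.Gamma (b - a) / Complex.Gamma b) *
      (poch a P * poch (b - a) Q / poch b (P + Q)) := by
  rw [show a + P + (b - a + Q) = b + ((P + Q : ℕ) : ℂ) by push_cast; ring,
    Gamma_poch a ha, Gamma_poch (b - a) (by simp; linarith), Gamma_poch b (by linarith)]
  ring

/-- extension of the point -/
noncomputable def XX {s : ℕ} (x : Fin (2*s+1) → ℝ) (i : ℕ) : ℝ :=
  if h : i - 1 < 2*s+1 then x ⟨i-1, h⟩ else 0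

lemma XX_succ {s : ℕ} (x : Fin (2*s+1) → ℝ) (i : Fin (2*s+1)) : XX x (i.1+1) = x i :=
  dif_pos i.2

lemma XX_mem {s : ℕ} (x : Fin (2*s+1) → ℝ)
    (hx : x ∈ Set.univ.pi fun _ : Fin (2*s+1) => Set.Ioo (0:ℝ) 1) (i : ℕ) :
    0 ≤ XX x i ∧ XX x i ≤ 1 := by
  unfold XX
  split_ifs with h
  · have := hx ⟨i-1, h⟩ (Set.mem_univ _)
    exact ⟨this.1.le, this.2.le⟩
  · simp

lemma ofFn_tail {s : ℕ} (x : Fin (2*s+1) → ℝ) :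
    (List.ofFn x).tail = (List.range' 2 (2*s)).map (XX x) := by
  apply List.ext_getElem
  · simp
  · intro n h1 h2
    have hn : n < 2*s := by simpa using h2
    simp only [List.getElem_tail, List.getElem_ofFn, List.getElem_map, List.getElem_range', XX]
    rw [dif_pos (by omega)]
    congr 2
    omega

lemma ofFn_headI {s : ℕ} (x : Fin (2*s+1) → ℝ) : (List.ofFn x).headI = XX x 1 := by
  rw [List.ofFn_succ]
  simp [XX]

/-- base factor -/
noncomputable def base (s : ℕ) (a b : ℕ → ℂ) (x : Fin (2*s+1) → ℝ) : ℂ :=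
  ∏ i : Fin (2*s+1), ((x i : ℂ) ^ (a (i.1+1) - 1) *
        ((1 - x i : ℝ) : ℂ) ^ (b (i.1+1) - a (i.1+1) - 1))

/-- summand -/
noncomputable def GG (s : ℕ) (a b : ℕ → ℂ) (z : ℂ) (k : Fin (s+1) → ℕ)
    (x : Fin (2*s+1) → ℝ) : ℂ :=
  (z ^ NN k s * poch (a 0) (NN k s) * (FF k : ℂ)) *
    ∏ i : Fin (2*s+1), ((x i : ℂ) ^ (a (i.1+1) + (PP k (i.1+1) : ℂ) - 1) *
        ((1 - x i : ℝ) : ℂ) ^ (b (i.1+1) - a (i.1+1) + (QQ k (i.1+1) : ℂ) - 1))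

lemma GG_eq (s : ℕ) (a b : ℕ → ℂ) (z : ℂ) (k : Fin (s+1) → ℕ) (x : Fin (2*s+1) → ℝ)
    (hx : x ∈ Set.univ.pi fun _ : Fin (2*s+1) => Set.Ioo (0:ℝ) 1) :
    GG s a b z k x = base s a b x *
      ((fun n => z ^ n * poch (a 0) n * (XX x 1 : ℂ) ^ n) (NN k s) *
        ((TT (uu s (XX x)) (vv s (XX x)) k : ℝ) : ℂ)) := by
  have hm := congrArg (fun r : ℝ => (r : ℂ)) (monomial_eq s (XX x) (XX_mem x hx) k)
  rw [← Fin.prod_univ_eq_prod_range (fun i => XX x (i+1) ^ PP k (i+1) *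
    (1 - XX x (i+1)) ^ QQ k (i+1)) (2*s+1)] at hm
  simp only [XX_succ] at hm
  push_cast at hm
  have hp : ∏ i : Fin (2*s+1), ((x i : ℂ) ^ (a (i.1+1) + (PP k (i.1+1) : ℂ) - 1) *
        ((1 - x i : ℝ) : ℂ) ^ (b (i.1+1) - a (i.1+1) + (QQ k (i.1+1) : ℂ) - 1)) =
      base s a b x * ∏ i : Fin (2*s+1), ((x i : ℂ) ^ PP k (i.1+1) *
        (1 - (x i : ℂ)) ^ QQ k (i.1+1)) := by
    unfold base
    rw [← Finset.prod_mul_distrib]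
    refine Finset.prod_congr rfl fun i _ => ?_
    have hi := hx i (Set.mem_univ _)
    have h1 : (x i : ℂ) ≠ 0 := by exact_mod_cast hi.1.ne'
    have h2 : ((1 - x i : ℝ) : ℂ) ≠ 0 := by
      have : (1 - x i : ℝ) ≠ 0 := by linarith [hi.2]
      exact_mod_cast this
    rw [show a (i.1+1) + (PP k (i.1+1) : ℂ) - 1 = (a (i.1+1) - 1) + (PP k (i.1+1) : ℂ) by ring,
      show b (i.1+1) - a (i.1+1) + (QQ k (i.1+1) : ℂ) - 1 =
        (b (i.1+1) - a (i.1+1) - 1) + (QQ k (i.1+1) : ℂ) by ring,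
      Complex.cpow_add _ _ h1, Complex.cpow_add _ _ h2, Complex.cpow_natCast, Complex.cpow_natCast]
    push_cast
    ring
  unfold GG
  rw [hp]
  beta_reduce
  linear_combination (z ^ NN k s * poch (a 0) (NN k s) * base s a b x) * hm

lemma series_enorm_le (s : ℕ) (a : ℕ → ℂ) (z : ℂ) (x : Fin (2*s+1) → ℝ)
    (hx : x ∈ Set.univ.pi fun _ : Fin (2*s+1) => Set.Ioo (0:ℝ) 1) :
    ∑' n : ℕ, ‖z ^ n * poch (a 0) n * (XX x 1 : ℂ) ^ n‖ₑ *
      ((VV (uu s (XX x)) (vv s (XX x)) s ^ n * ((Nat.factorial n : ℝ≥0))⁻¹ : ℝ≥0) : ℝ≥0∞) ≤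
    ∑' n : ℕ, ‖poch (a 0) n / (Nat.factorial n : ℂ) * z ^ n‖ₑ := by
  refine ENNReal.tsum_le_tsum fun n => ?_
  have hV := VV_le_one s (XX x) (XX_mem x hx) s
  have h1 := XX_mem x hx 1
  rw [enorm_eq_nnnorm, enorm_eq_nnnorm, ← ENNReal.coe_mul, ENNReal.coe_le_coe,
    ← NNReal.coe_le_coe]
  push_cast
  simp only [norm_mul, norm_pow, norm_div, Complex.norm_real, Complex.norm_natCast]
  have h2 : ‖XX x 1‖ ^ n ≤ 1 := pow_le_one₀ (norm_nonneg _) (by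
    rw [Real.norm_eq_abs, abs_of_nonneg h1.1]; exact h1.2)
  have h3 : (VV (uu s (XX x)) (vv s (XX x)) s : ℝ) ^ n ≤ 1 :=
    pow_le_one₀ (NNReal.coe_nonneg _) (by exact_mod_cast hV)
  have h4 : ‖XX x 1‖ ^ n * (VV (uu s (XX x)) (vv s (XX x)) s : ℝ) ^ n ≤ 1 :=
    mul_le_one₀ h2 (by positivity) h3
  have h5 : 0 ≤ ‖poch (a 0) n‖ / (Nat.factorial n : ℝ) * ‖z‖ ^ n := by positivity
  calc _ = (‖poch (a 0) n‖ / (Nat.factorial n : ℝ) * ‖z‖ ^ n) *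
        (‖XX x 1‖ ^ n * (VV (uu s (XX x)) (vv s (XX x)) s : ℝ) ^ n) := by ring
    _ ≤ _ := mul_le_of_le_one_right h5 h4

lemma const_ne_top (a0 z : ℂ) (hz : ‖z‖ < 1) :
    ∑' n : ℕ, ‖poch a0 n / (Nat.factorial n : ℂ) * z ^ n‖ₑ ≠ ∞ := by
  have h : Summable fun n : ℕ => ‖poch a0 n / (Nat.factorial n : ℂ) * z ^ n‖ :=
    (binom_hasSum a0 z hz).summable.norm
  have h' : Summable fun n : ℕ => ‖poch a0 n / (Nat.factorial n : ℂ) * z ^ n‖₊ := by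
    rw [← NNReal.summable_coe]; simpa using h
  exact ENNReal.tsum_coe_ne_top_iff_summable.2 h'

lemma tsum_GG (s : ℕ) (a b : ℕ → ℂ) (z : ℂ) (hz : ‖z‖ < 1) (x : Fin (2*s+1) → ℝ)
    (hx : x ∈ Set.univ.pi fun _ : Fin (2*s+1) => Set.Ioo (0:ℝ) 1) :
    ∑' k : Fin (s+1) → ℕ, GG s a b z k x =
      base s a b x / (1 - ((nestR (List.ofFn x).tail * (List.ofFn x).headI : ℝ) : ℂ) * z) ^ (a 0)
      := by
  rw [tsum_congr (fun k => GG_eq s a b z k x hx), tsum_mul_left, tsum_TT_complex _ _ _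
    (fun n => z ^ n * poch (a 0) n * (XX x 1 : ℂ) ^ n)
    (ne_top_of_le_ne_top (const_ne_top (a 0) z hz) (series_enorm_le s a z x hx)),
    div_eq_mul_one_div (base s a b x)]
  congr 1
  have hn := nest_eq s (XX x) (XX_mem x hx) s le_rfl
  rw [Nat.sub_self, zero_add] at hn
  rw [ofFn_tail, ofFn_headI, hn]
  have h1 := XX_mem x hx 1
  have hV : (VV (uu s (XX x)) (vv s (XX x)) s : ℝ) ≤ 1 := by
    exact_mod_cast VV_le_one s (XX x) (XX_mem x hx) s
  rw [← (binom_hasSum (a 0) _ ?_).tsum_eq]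
  · refine tsum_congr fun n => ?_
    push_cast
    ring
  · rw [norm_mul, Complex.norm_real, Real.norm_eq_abs,
      abs_of_nonneg (mul_nonneg (NNReal.coe_nonneg _) h1.1)]
    have : (VV (uu s (XX x)) (vv s (XX x)) s : ℝ) * XX x 1 ≤ 1 := mul_le_one₀ hV h1.1 h1.2
    calc _ ≤ 1 * ‖z‖ := mul_le_mul_of_nonneg_right this (norm_nonneg _)
      _ < 1 := by linarith

lemma cube_measure (m : ℕ) :
    (volume : Measure (Fin m → ℝ)).restrict (Set.univ.pi fun _ : Fin m => Set.Ioo (0:ℝ) 1) =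
      Measure.pi fun _ : Fin m => (volume : Measure ℝ).restrict (Set.Ioo (0:ℝ) 1) := by
  rw [volume_pi, Measure.restrict_pi_pi]

lemma base_integrable (s : ℕ) (a b : ℕ → ℂ)
    (hab : ∀ i : ℕ, 1 ≤ i → i ≤ 2*s+1 → (a i).re < (b i).re ∧ 0 < (a i).re) :
    Integrable (base s a b) ((volume : Measure (Fin (2*s+1) → ℝ)).restrict
      (Set.univ.pi fun _ : Fin (2*s+1) => Set.Ioo (0:ℝ) 1)) := by
  rw [cube_measure]
  refine Integrable.fintype_prod (f := fun (i : Fin (2*s+1)) (t : ℝ) =>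
    (t : ℂ) ^ (a (i.1+1) - 1) * ((1 - t : ℝ) : ℂ) ^ (b (i.1+1) - a (i.1+1) - 1)) fun i => ?_
  have h := hab (i.1+1) (by omega) (by omega)
  exact (beta_int _ _ h.2 (by simp; linarith)).1

lemma GG_integral (s : ℕ) (a b : ℕ → ℂ) (z : ℂ)
    (hab : ∀ i : ℕ, 1 ≤ i → i ≤ 2*s+1 → (a i).re < (b i).re ∧ 0 < (a i).re)
    (k : Fin (s+1) → ℕ) :
    Integrable (GG s a b z k) ((volume : Measure (Fin (2*s+1) → ℝ)).restrict
      (Set.univ.pi fun _ : Fin (2*s+1) => Set.Ioo (0:ℝ) 1)) ∧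
    ∫ x in Set.univ.pi fun _ : Fin (2*s+1) => Set.Ioo (0:ℝ) 1, GG s a b z k x =
      (∏ j ∈ Finset.Icc 1 (2*s+1),
        Complex.Gamma (a j) * Complex.Gamma (b j - a j) / Complex.Gamma (b j)) *
      (z ^ NN k s * (poch (a 0) (NN k s) * (FF k : ℂ) * ∏ i ∈ Finset.range (2*s+1),
      (poch (a (i+1)) (PP k (i+1)) * poch (b (i+1) - a (i+1)) (QQ k (i+1)) /
        poch (b (i+1)) (PP k (i+1) + QQ k (i+1))))) := by
  have hi : ∀ i : Fin (2*s+1), _ := fun i =>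
    beta_int (a (i.1+1) + (PP k (i.1+1) : ℂ)) (b (i.1+1) - a (i.1+1) + (QQ k (i.1+1) : ℂ))
      (by
        have h := hab (i.1+1) (by omega) (by omega)
        have h2 : (0:ℝ) ≤ PP k (i.1+1) := Nat.cast_nonneg _
        simp only [Complex.add_re, Complex.natCast_re]; linarith)
      (by
        have h := hab (i.1+1) (by omega) (by omega)
        have h2 : (0:ℝ) ≤ QQ k (i.1+1) := Nat.cast_nonneg _
        simp only [Complex.add_re, Complex.sub_re, Complex.natCast_re]; linarith)
  rw [cube_measure]
  constructor
  · exact (Integrable.fintype_prod (fun i => (hi i).1)).const_mul _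
  · unfold GG
    rw [integral_const_mul, integral_fintype_prod_eq_prod (𝕜 := ℂ)
      (fun (i : Fin (2*s+1)) (t : ℝ) => (t : ℂ) ^ (a (i.1+1) + (PP k (i.1+1) : ℂ) - 1) *
        ((1 - t : ℝ) : ℂ) ^ (b (i.1+1) - a (i.1+1) + (QQ k (i.1+1) : ℂ) - 1)),
      Finset.prod_congr rfl (fun i _ => (hi i).2)]
    have h3 : ∀ i ∈ (Finset.univ : Finset (Fin (2*s+1))), _ := fun i _ =>
      beta_poch (a (i.1+1)) (b (i.1+1)) (hab (i.1+1) (by omega) (by omega)).2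
        (hab (i.1+1) (by omega) (by omega)).1 (PP k (i.1+1)) (QQ k (i.1+1))
    rw [Finset.prod_congr rfl h3, Finset.prod_mul_distrib,
      Fin.prod_univ_eq_prod_range (fun i => Complex.Gamma (a (i+1)) *
        Complex.Gamma (b (i+1) - a (i+1)) / Complex.Gamma (b (i+1))) (2*s+1),
      Fin.prod_univ_eq_prod_range (fun i =>
        (poch (a (i+1)) (PP k (i+1)) * poch (b (i+1) - a (i+1)) (QQ k (i+1)) /
        poch (b (i+1)) (PP k (i+1) + QQ k (i+1)))) (2*s+1)]
    have h4 : ∏ j ∈ Finset.Icc 1 (2*s+1),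
        Complex.Gamma (a j) * Complex.Gamma (b j - a j) / Complex.Gamma (b j) =
        ∏ i ∈ Finset.range (2*s+1), Complex.Gamma (a (i+1)) *
        Complex.Gamma (b (i+1) - a (i+1)) / Complex.Gamma (b (i+1)) := by
      rw [Finset.range_eq_Ico, Finset.prod_Ico_add' (fun j => Complex.Gamma (a j) *
        Complex.Gamma (b j - a j) / Complex.Gamma (b j))]
      rfl
    rw [h4]
    ring

lemma kx_fin {s : ℕ} (k : Fin (s+1) → ℕ) (i : Fin (s+1)) : kx k i.1 = k i :=
  dif_pos i.2

lemma sum_Iic {s : ℕ} (k : Fin (s+1) → ℕ) (j : Fin (s+1)) :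
    ∑ i ∈ Finset.Iic j, k i = NN k j.1 := by
  unfold NN
  refine Finset.sum_bij (fun i _ => i.1) ?_ ?_ ?_ ?_
  · intro i hi
    have := Finset.mem_Iic.1 hi
    rw [Fin.le_def] at this
    simp; omega
  · intro i _ j _ h; exact Fin.ext h
  · intro i hi
    have := Finset.mem_range.1 hi
    exact ⟨⟨i, by omega⟩, by rw [Finset.mem_Iic, Fin.le_def]; simp; omega, rfl⟩
  · intro i _; exact (kx_fin k i).symm

lemma sum_all {s : ℕ} (k : Fin (s+1) → ℕ) : ∑ j, k j = NN k s := by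
  unfold NN
  rw [← Fin.sum_univ_eq_sum_range (fun i => kx k i)]
  simp [kx_fin]

/-- the multisum expansion of the Vasilyev-type integral, odd case. -/
theorem J_odd_multisum (s : ℕ) (hs : 1 ≤ s) (z : ℂ) (hz : ‖z‖ < 1) (a b : ℕ → ℂ)
    (ha0 : 0 < (a 0).re)
    (hab : ∀ i : ℕ, 1 ≤ i → i ≤ 2*s+1 → (a i).re < (b i).re ∧ 0 < (a i).re) :
    Jint (2*s+1) a b z =
      (∏ j ∈ Finset.Icc 1 (2*s+1),
        Complex.Gamma (a j) * Complex.Gamma (b j - a j) / Complex.Gamma (b j)) *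
      ∑' k : Fin (s+1) → ℕ, z ^ (∑ j, k j) *
        ((poch (a (2*s+1)) (k 0) / (Nat.factorial (k 0) : ℂ)) *
          (poch (a (2*s)) (k 0) / poch (b (2*s+1)) (k 0))) *
        ∏ j : Fin s,
          (poch (b (2*s - 2*j.1) - a (2*s - 2*j.1)) (k j.succ) /
            (Nat.factorial (k j.succ) : ℂ)) *
          (poch (a (2*s - 2*j.1 - 1)) (∑ i ∈ Finset.Iic j.succ, k i) /
            poch (b (2*s - 2*j.1 - 1)) (∑ i ∈ Finset.Iic j.succ, k i)) *
          (poch (a (2*s - 2*j.1 - 2)) (∑ i ∈ Finset.Iic j.succ, k i) /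
            poch (b (2*s - 2*j.1)) (∑ i ∈ Finset.Iic j.succ, k i)) := by

  set μ := (volume : Measure (Fin (2*s+1) → ℝ)).restrict
      (Set.univ.pi fun _ : Fin (2*s+1) => Set.Ioo (0:ℝ) 1) with hμ
  have hmeas : MeasurableSet (Set.univ.pi fun _ : Fin (2*s+1) => Set.Ioo (0:ℝ) 1) :=
    MeasurableSet.univ_pi fun _ => measurableSet_Ioo
  have h1 : Jint (2*s+1) a b z = ∫ x, ∑' k : Fin (s+1) → ℕ, GG s a b z k x ∂μ := by
    unfold Jint
    refine setIntegral_congr_fun hmeas fun x hx => ?_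
    exact (tsum_GG s a b z hz x hx).symm
  have hfin : ∑' k : Fin (s+1) → ℕ, ∫⁻ x, ‖GG s a b z k x‖ₑ ∂μ ≠ ∞ := by
    rw [← lintegral_tsum (fun k => (GG_integral s a b z hab k).1.aestronglyMeasurable.enorm)]
    have hle : ∫⁻ x, ∑' k : Fin (s+1) → ℕ, ‖GG s a b z k x‖ₑ ∂μ ≤
        ∫⁻ x, ‖base s a b x‖ₑ *
          ∑' n : ℕ, ‖poch (a 0) n / (Nat.factorial n : ℂ) * z ^ n‖ₑ ∂μ := by
      refine setLIntegral_mono' hmeas fun x hx => ?_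
      have he : ∀ k : Fin (s+1) → ℕ, ‖GG s a b z k x‖ₑ = ‖base s a b x‖ₑ *
          ((fun n => ‖z ^ n * poch (a 0) n * (XX x 1 : ℂ) ^ n‖ₑ) (NN k s) *
            (TT (uu s (XX x)) (vv s (XX x)) k : ℝ≥0∞)) := by
        intro k
        rw [GG_eq s a b z k x hx, enorm_mul, enorm_mul]
        congr 2
        simp [enorm_eq_nnnorm]
      rw [tsum_congr he, ENNReal.tsum_mul_left,
        tsum_TT _ _ s (fun n => ‖z ^ n * poch (a 0) n * (XX x 1 : ℂ) ^ n‖ₑ)]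
      exact mul_le_mul_right (series_enorm_le s a z x hx) _
    refine ne_top_of_le_ne_top ?_ hle
    rw [lintegral_mul_const' _ _ (const_ne_top (a 0) z hz)]
    exact ENNReal.mul_ne_top (base_integrable s a b hab).2.ne (const_ne_top (a 0) z hz)
  rw [h1, integral_tsum (fun k => (GG_integral s a b z hab k).1.aestronglyMeasurable) hfin,
    ← tsum_mul_left]
  refine tsum_congr fun k => ?_
  rw [(GG_integral s a b z hab k).2, poch_prod_eq]
  congr 1
  rw [sum_all, ← mul_assoc]
  congr 1
  rw [← Fin.prod_univ_eq_prod_range]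
  refine Finset.prod_congr rfl fun j _ => ?_
  rw [sum_Iic, ← kx_fin k j.succ, Fin.val_succ]
end

section
/- (Zudilin's identity for Vasilyev's integrals) For all integers n ≥ 0 and E ≥ 2, ∫_{[0,1]^E} ∏_{i=1}^{E} x_i^n(1−x_i)^n / Q_E(x₁,…,x_E)^{n+1} dx₁⋯dx_E = (n!^{2E+1}(3n+2)!/(2n+1)!^{E+2}) · _{E+4}F_{E+3}[3n+2, (3/2)n+2, n+1, …, n+1; (3/2)n+1, 2n+2, …, 2n+2; (−1)^{E+1}], where Q_E(x₁,…,x_E) = 1 − (⋯(1−(1−x_E)x_{E−1})⋯)x₁, there are E+2 repeated upper parameters n+1 and E+2 repeated lower parameters 2n+2. -/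
open MeasureTheory

open Finset in
/-- alternating finite beta sum -/
theorem alt_sum (N : ℕ) : ∀ a d : ℕ,
    ∑ l ∈ range (N+1), (-1:ℝ)^l * (N.choose l : ℝ) * ((a+l).factorial / (a+d+1+l).factorial : ℝ)
      = a.factorial * (d+N).factorial / (d.factorial * (a+d+1+N).factorial) := by
  induction N with
  | zero => intro a d; simp; field_simp
  | succ N ih =>
    intro a d
    have h1 : ∑ l ∈ range (N+1+1), (-1:ℝ)^l * ((N+1).choose l : ℝ) * ((a+l).factorial / (a+d+1+l).factorial : ℝ)
       = (∑ l ∈ range (N+1), (-1:ℝ)^l * (N.choose l : ℝ) * ((a+l).factorial / (a+d+1+l).factorial : ℝ))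
        - ∑ l ∈ range (N+1), (-1:ℝ)^l * (N.choose l : ℝ) * (((a+1)+l).factorial / ((a+1)+d+1+l).factorial : ℝ) := by
      rw [sum_range_succ']
      have h2 : ∑ l ∈ range (N+1), (-1:ℝ)^l * (N.choose l : ℝ) * ((a+l).factorial / (a+d+1+l).factorial : ℝ)
         = ∑ l ∈ range (N+1), (-1:ℝ)^(l+1) * (N.choose (l+1) : ℝ) * ((a+(l+1)).factorial / (a+d+1+(l+1)).factorial : ℝ) + (a.factorial / (a+d+1).factorial : ℝ) := by
        have := sum_range_succ' (fun l => (-1:ℝ)^l * (N.choose l : ℝ) * ((a+l).factorial / (a+d+1+l).factorial : ℝ)) (N+1)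
        rw [sum_range_succ] at this
        simpa using this
      rw [h2, add_sub_right_comm, ← sum_sub_distrib]
      congr 1
      · apply sum_congr rfl
        intro l _
        rw [Nat.choose_succ_succ, show a + (l+1) = a+1+l by ring, show a+d+1+(l+1) = a+1+d+1+l by ring]
        push_cast
        ring
      · simp
    rw [h1, ih, ih]
    have e1 : (a+1).factorial = (a+1) * a.factorial := Nat.factorial_succ a
    have e2 : (d+(N+1)).factorial = (d+N+1) * (d+N).factorial := Nat.factorial_succ (d+N)
    have e3 : (a+d+1+(N+1)).factorial = (a+d+1+N+1) * (a+d+1+N).factorial := Nat.factorial_succ _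
    have e4 : (a+1+d+1+N).factorial = (a+d+1+N+1) * (a+d+1+N).factorial := by
      rw [show a+1+d+1+N = a+d+1+N+1 by ring]; exact Nat.factorial_succ _
    rw [e1, e2, e3, e4]
    have p1 : (d.factorial:ℝ) ≠ 0 := by positivity
    have p2 : ((a+d+1+N).factorial:ℝ) ≠ 0 := by positivity
    have p3 : ((a:ℝ)+d+1+N+1) ≠ 0 := by positivity
    push_cast
    field_simp
    ring

/-- spectral coefficient in terms of `k`, `i = j - k`. -/
noncomputable def Acoef (n k i : ℕ) : ℝ :=
  (k+i).factorial * (2*n+1+(k+i)).factorial / (i.factorial * (3*n+2+(k+i)+k).factorial) *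
   ((n+k).factorial * (2*k+3*n+2) * (k+3*n+1).factorial / (n.factorial * k.factorial * (k+2*n+1).factorial))

/-- beta moments -/
noncomputable def bet (n i : ℕ) : ℝ := n.factorial * (n+i).factorial / (2*n+1+i).factorial

open Finset in
theorem Acoef_eigen (n j k : ℕ) (hk : k ≤ j) :
    ∑ i ∈ Ico k (j+1), (j.choose i : ℝ) * (-1)^i * bet n i * Acoef n k (i-k)
      = (-1)^k * bet n k * Acoef n k (j-k) := by
  obtain ⟨N, rfl⟩ := Nat.exists_eq_add_of_le hk
  rw [sum_Ico_eq_sum_range, show k+N+1-k = N+1 by omega, show k+N-k = N by omega]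
  have h := alt_sum N (n+k) (2*n+1+k)
  have key : ∀ l ∈ range (N+1), ((k+N).choose (k+l) : ℝ) * (-1)^(k+l) * bet n (k+l) * Acoef n k (k+l-k)
     = ((k+N).factorial * n.factorial / N.factorial * ((n+k).factorial * (2*k+3*n+2) * (k+3*n+1).factorial / (n.factorial * k.factorial * (k+2*n+1).factorial)) * (-1)^k) *
       ((-1:ℝ)^l * (N.choose l : ℝ) * ((n+k+l).factorial / (n+k+(2*n+1+k)+1+l).factorial : ℝ)) := by
    intro l hl
    have hl' : l ≤ N := by simpa [Nat.lt_succ_iff] using hl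
    rw [Nat.cast_choose ℝ hl', Nat.cast_choose ℝ (by omega : k+l ≤ k+N), show k+N-(k+l) = N-l by omega,
      show k+l-k = l by omega]
    unfold bet Acoef
    rw [show n+k+(2*n+1+k)+1+l = 3*n+2+(k+l)+k by ring, show n+k+l=n+(k+l) by ring]
    rw [pow_add]
    have : ((N-l).factorial:ℝ) ≠ 0 := by positivity
    field_simp
  rw [sum_congr rfl key, ← mul_sum, h]
  unfold bet Acoef
  rw [show n+k+(2*n+1+k)+1+N = 3*n+2+(k+N)+k by ring, show 2*n+1+k+N=2*n+1+(k+N) by ring]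
  field_simp

/-- WZ mate. -/
noncomputable def Gmate (n j k : ℕ) : ℝ :=
  if k = 0 then 0 else
   ((j.factorial * (2*n+1+j).factorial / (n.factorial) : ℝ)) *
     ((n+k).factorial * (k+3*n+1).factorial / ((k-1).factorial * (k+2*n).factorial * (j+1-k).factorial * (3*n+2+j+k).factorial))

theorem wz_step (n j k : ℕ) (hk : k < j+1) :
    Acoef n k (j+1-k) - Acoef n k (j-k) = Gmate n j k - Gmate n j (k+1) := by
  obtain ⟨i, rfl⟩ := Nat.exists_eq_add_of_le (Nat.lt_succ_iff.mp hk)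
  rw [show k+i+1-k = i+1 by omega, show k+i-k = i by omega]
  have f1 : (k+(i+1)).factorial = (k+i+1) * (k+i).factorial := Nat.factorial_succ (k+i)
  have f2 : (2*n+1+(k+(i+1))).factorial = (2*n+1+(k+i)+1) * (2*n+1+(k+i)).factorial :=
    Nat.factorial_succ _
  have f3 : (3*n+2+(k+(i+1))+k).factorial = (3*n+2+(k+i)+k+1) * (3*n+2+(k+i)+k).factorial := by
    rw [show 3*n+2+(k+(i+1))+k = 3*n+2+(k+i)+k+1 by ring]; exact Nat.factorial_succ _
  have f4 : (3*n+2+(k+i)+(k+1)).factorial = (3*n+2+(k+i)+k+1) * (3*n+2+(k+i)+k).factorial :=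
    Nat.factorial_succ _
  have f5 : (n+(k+1)).factorial = (n+k+1) * (n+k).factorial := Nat.factorial_succ _
  have f6 : (k+1+3*n+1).factorial = (k+3*n+1+1) * (k+3*n+1).factorial := by
    rw [show k+1+3*n+1 = k+3*n+1+1 by ring]; exact Nat.factorial_succ _
  have f7 : (i+1).factorial = (i+1) * i.factorial := Nat.factorial_succ _
  unfold Acoef Gmate
  rw [if_neg (by omega : k+1 ≠ 0), show k+i+1-(k+1) = i by omega, show k+i+1-k=i+1 by omega,
    show k+1-1=k by omega, show k+1+2*n = k+2*n+1 by ring]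
  rw [f1, f2, f3, f4, f5, f6, f7]
  rcases Nat.eq_zero_or_pos k with rfl | hk0
  · simp only [if_true]
    push_cast
    field_simp
    ring
  · obtain ⟨q, rfl⟩ : ∃ q, k = q+1 := ⟨k-1, by omega⟩
    rw [if_neg (by omega : q+1 ≠ 0), show q+1-1=q by omega, Nat.factorial_succ q,
      Nat.factorial_succ (q+1+2*n)]
    push_cast
    field_simp
    ring

open Finset in
theorem Acoef_sum (n j : ℕ) : ∑ k ∈ range (j+1), Acoef n k (j-k) = 1 := by
  induction j with
  | zero =>
    simp [Acoef]
    rw [show 3*n+2 = 3*n+1+1 by ring, Nat.factorial_succ (3*n+1)]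
    push_cast
    field_simp
    norm_num [add_assoc]
  | succ j ih =>
    rw [sum_range_succ, ← ih]
    have h1 := sum_congr rfl (fun k (hk : k ∈ range (j+1)) => wz_step n j k (by simpa using hk))
    rw [sum_sub_distrib, sum_range_sub'] at h1
    have h2 : Acoef n (j+1) (j+1-(j+1)) = Gmate n j (j+1) := by
      unfold Acoef Gmate
      rw [if_neg (by omega : j+1 ≠ 0), show j+1-(j+1) = 0 by omega, show j+1-1=j by omega]
      have f3 : (3*n+2+(j+1+0)+(j+1)).factorial = (3*n+2+j+(j+1)+1) * (3*n+2+j+(j+1)).factorial := by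
        rw [show 3*n+2+(j+1+0)+(j+1) = 3*n+2+j+(j+1)+1 by ring]; exact Nat.factorial_succ _
      have f2 : (2*n+1+(j+1+0)).factorial = (2*n+1+j+1) * (2*n+1+j).factorial :=
        Nat.factorial_succ _
      have f1 : (j+1+2*n+1).factorial = (2*n+1+j+1) * (j+1+2*n).factorial := by
        rw [Nat.factorial_succ]; congr 1; ring
      rw [f1, f2, f3]
      push_cast
      field_simp
      ring
    have h0 : Gmate n j 0 = 0 := by simp [Gmate]
    rw [h2]; rw [h0] at h1; linarith

/-- one-variable measure -/
noncomputable def mu1 : Measure ℝ := volume.restrict (Set.Ioo (0:ℝ) 1)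

/-- the cube measure -/
noncomputable def cube (m : ℕ) : Measure (Fin m → ℝ) := Measure.pi (fun _ : Fin m => mu1)

theorem cube_eq (m : ℕ) : cube m = volume.restrict (Set.univ.pi fun _ : Fin m => Set.Ioo (0:ℝ) 1) := by
  unfold cube mu1
  rw [← Measure.restrict_pi_pi]; rfl

theorem cube_int {m : ℕ} {f : (Fin m → ℝ) → ℝ} (hf : Continuous f) : Integrable f (cube m) := by
  rw [cube_eq]
  have h : IntegrableOn f (Set.Icc (fun _ => 0) (fun _ => 1)) := hf.integrableOn_Icc
  refine h.mono_set ?_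
  intro x hx
  exact ⟨fun i => (hx i trivial).1.le, fun i => (hx i trivial).2.le⟩

instance : IsFiniteMeasure mu1 := by unfold mu1; infer_instance

instance (m : ℕ) : IsFiniteMeasure (cube m) := by unfold cube; infer_instance

theorem cube_succ (m : ℕ) (f : ℝ → ℝ) (g : (Fin m → ℝ) → ℝ) :
    ∫ x, f (x 0) * g (fun i => x i.succ) ∂(cube (m+1)) = (∫ t, f t ∂mu1) * ∫ y, g y ∂(cube m) := by
  have h := (measurePreserving_piFinSuccAbove (fun _ : Fin (m+1) => mu1) 0).integral_comp'
    (fun p : ℝ × (Fin m → ℝ) => f p.1 * g p.2)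
  have h2 := integral_prod_mul (μ := mu1) (ν := cube m) f g
  rw [← h2]
  exact h

theorem beta_nat (a b : ℕ) : ∫ t, t^a * (1-t)^b ∂mu1 = (a.factorial * b.factorial / (a+b+1).factorial : ℝ) := by
  unfold mu1
  rw [← integral_Ioc_eq_integral_Ioo, ← intervalIntegral.integral_of_le zero_le_one]
  have h := Complex.betaIntegral_eq_Gamma_mul_div (a+1) (b+1) (by simp; positivity) (by simp; positivity)
  rw [show (a:ℂ)+1+(b+1) = ((a+b+1:ℕ):ℂ)+1 by push_cast; ring] at h
  rw [Complex.Gamma_nat_eq_factorial, Complex.Gamma_nat_eq_factorial, Complex.Gamma_nat_eq_factorial] at h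
  unfold Complex.betaIntegral at h
  have h' : ∫ (x : ℝ) in (0:ℝ)..1, (x:ℂ) ^ ((a:ℂ) + 1 - 1) * (1 - (x:ℂ)) ^ ((b:ℂ) + 1 - 1)
     = ((∫ t in (0:ℝ)..1, t^a * (1-t)^b : ℝ) : ℂ) := by
    rw [← intervalIntegral.integral_ofReal]
    congr 1
    ext x
    simp
  rw [h'] at h
  apply Complex.ofReal_injective
  rw [h]; push_cast; rfl

theorem nestR_cont (m : ℕ) : Continuous (fun x : Fin m → ℝ => nestR (List.ofFn x)) := by
  induction m with
  | zero => simp [nestR]; exact continuous_const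
  | succ m ih =>
    simp only [List.ofFn_succ, nestR]
    have : Continuous (fun x : Fin (m+1) → ℝ => nestR (List.ofFn fun i => x i.succ)) :=
      ih.comp (by fun_prop)
    fun_prop

theorem nestR_mem (m : ℕ) (x : Fin m → ℝ) (hx : ∀ i, x i ∈ Set.Ioo (0:ℝ) 1) :
    nestR (List.ofFn x) ∈ Set.Icc (0:ℝ) 1 := by
  induction m with
  | zero => simp [nestR]
  | succ m ih =>
    simp only [List.ofFn_succ, nestR]
    have h := ih (fun i => x i.succ) (fun i => hx _)
    have h0 := hx 0
    constructor
    · nlinarith [h.1, h.2, h0.1, h0.2]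
    · nlinarith [h.1, h.2, h0.1, h0.2, mul_nonneg h.1 h0.1.le]

/-- weight -/
noncomputable def Wt (n m : ℕ) (x : Fin m → ℝ) : ℝ := ∏ i, ((x i)^n * (1 - x i)^n)

theorem Wt_cont (n m : ℕ) : Continuous (Wt n m) := by unfold Wt; fun_prop

theorem Wt_succ (n m : ℕ) (x : Fin (m+1) → ℝ) :
    Wt n (m+1) x = (x 0)^n * (1 - x 0)^n * Wt n m (fun i => x i.succ) := by
  unfold Wt; rw [Fin.prod_univ_succ]

theorem Wt_nonneg (n m : ℕ) (x : Fin m → ℝ) (hx : ∀ i, x i ∈ Set.Ioo (0:ℝ) 1) : 0 ≤ Wt n m x := by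
  unfold Wt
  refine Finset.prod_nonneg fun i _ => ?_
  have := hx i
  exact mul_nonneg (pow_nonneg this.1.le _) (pow_nonneg (by linarith [this.2]) _)

/-- moments -/
noncomputable def Mom (n m j : ℕ) : ℝ := ∫ x, Wt n m x * nestR (List.ofFn x) ^ j ∂(cube m)

theorem Mom_zero (n j : ℕ) : Mom n 0 j = 1 := by
  simp [Mom, Wt, nestR, cube, Measure.real]

theorem bet_int (n i : ℕ) : ∫ t, t^(n+i) * (1-t)^n ∂mu1 = bet n i := by
  rw [beta_nat, bet, show n+i+n+1=2*n+1+i by ring]; ring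

theorem Mom_term (n m i : ℕ) :
    ∫ x, Wt n (m+1) x * (nestR (List.ofFn fun i => x (Fin.succ i)) * x 0)^i ∂(cube (m+1))
      = bet n i * Mom n m i := by
  rw [← bet_int, Mom, ← cube_succ]
  congr 1; ext x
  rw [Wt_succ]; ring

theorem tail_cont (m : ℕ) : Continuous (fun x : Fin (m+1) → ℝ => nestR (List.ofFn fun i => x (Fin.succ i))) :=
  (nestR_cont m).comp (by fun_prop)

theorem Mom_succ (n m j : ℕ) : Mom n (m+1) j =
    ∑ i ∈ Finset.range (j+1), (j.choose i : ℝ) * (-1)^i * bet n i * Mom n m i := by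
  have : ∀ x : Fin (m+1) → ℝ, Wt n (m+1) x * nestR (List.ofFn x) ^ j =
     ∑ i ∈ Finset.range (j+1), ((j.choose i : ℝ) * (-1)^i) *
        (Wt n (m+1) x * (nestR (List.ofFn fun i => x (Fin.succ i)) * x 0)^i) := by
    intro x
    simp only [List.ofFn_succ, nestR]
    rw [sub_eq_neg_add, add_pow, Finset.mul_sum]
    refine Finset.sum_congr rfl fun i _ => ?_
    rw [neg_pow]; simp; ring
  unfold Mom
  simp_rw [this]
  rw [integral_finsetSum]
  · refine Finset.sum_congr rfl fun i _ => ?_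
    rw [integral_const_mul, Mom_term, Mom]; ring
  · intro i _
    apply cube_int
    have := Wt_cont n (m+1)
    have := tail_cont m
    fun_prop

open Finset in
theorem Mom_spec (n m : ℕ) : ∀ j, Mom n m j =
    ∑ k ∈ range (j+1), ((-1)^k * bet n k)^m * Acoef n k (j-k) := by
  induction m with
  | zero => intro j; simp [Mom_zero, Acoef_sum]
  | succ m ih =>
    intro j
    rw [Mom_succ]
    simp_rw [ih, mul_sum]
    rw [sum_comm' (s' := fun k => Ico k (j+1)) (t' := range (j+1))
      (by intro x y; simp only [mem_range, mem_Ico]; omega)]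
    refine sum_congr rfl fun k hk => ?_
    have h := Acoef_eigen n j k (by simpa [Nat.lt_succ_iff] using hk)
    rw [pow_succ, mul_assoc, ← h, mul_sum]
    refine sum_congr rfl fun i _ => ?_
    ring

theorem hs_congr {f g : ℕ → ℝ} {a b : ℝ} (h : HasSum f a) (hf : ∀ i, g i = f i) (hab : b = a) :
    HasSum g b := by
  rw [hab, funext hf]; exact h

theorem gauss_sum (a n : ℕ) :
    HasSum (fun i : ℕ => ((a+i).factorial : ℝ)^2 / (i.factorial * (2*a+n+2+i).factorial))
      ((a.factorial:ℝ)^2 * n.factorial / ((a+n+1).factorial:ℝ)^2) := by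
  have hlim : ∀ᵐ t ∂mu1, HasSum (fun i : ℕ => ((i+a).choose a : ℝ) * (t^(a+i) * (1-t)^(a+n+1)))
      (t^a * (1-t)^n) := by
    unfold mu1
    filter_upwards [ae_restrict_mem measurableSet_Ioo] with t ht
    have h := (hasSum_choose_mul_geometric_of_norm_lt_one a (r := t)
      (by rw [Real.norm_eq_abs, abs_of_pos ht.1]; exact ht.2)).mul_left (t^a * (1-t)^(a+n+1))
    refine hs_congr h (fun i => ?_) ?_
    · rw [pow_add]; ring
    · have : (1-t) ≠ 0 := by linarith [ht.2]
      rw [show a+n+1 = n+(a+1) by ring, pow_add (1-t) n]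
      field_simp
  have hint : Integrable (fun t : ℝ => t^a * (1-t)^n) mu1 := by
    unfold mu1
    have h : IntegrableOn (fun t : ℝ => t^a * (1-t)^n) (Set.Icc 0 1) :=
      Continuous.integrableOn_Icc (by fun_prop)
    exact h.mono_set Set.Ioo_subset_Icc_self
  have h := hasSum_integral_of_dominated_convergence (μ := mu1)
    (F := fun (i : ℕ) (t : ℝ) => ((i+a).choose a : ℝ) * (t^(a+i) * (1-t)^(a+n+1)))
    (f := fun t => t^a * (1-t)^n)
    (fun (i : ℕ) (t : ℝ) => ((i+a).choose a : ℝ) * (t^(a+i) * (1-t)^(a+n+1)))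
    (fun i => Continuous.aestronglyMeasurable (by fun_prop))
    (by
      intro i
      unfold mu1
      filter_upwards [ae_restrict_mem measurableSet_Ioo] with t ht
      rw [Real.norm_eq_abs, abs_of_nonneg]
      have := ht.1.le
      have : 0 ≤ 1 - t := by linarith [ht.2]
      positivity)
    (hlim.mono fun t ht => ht.summable)
    (hint.congr (hlim.mono fun t ht => ht.tsum_eq.symm)) hlim
  simp_rw [integral_const_mul, beta_nat] at h
  refine hs_congr (h.mul_left ((a.factorial:ℝ) / (a+n+1).factorial)) (fun i => ?_) ?_
  · rw [Nat.add_choose, Nat.cast_div (Nat.factorial_mul_factorial_dvd_factorial_add i a) (by positivity),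
      show a+i+(a+n+1)+1 = 2*a+n+2+i by ring, add_comm i a]
    push_cast
    field_simp
  · field_simp

/-- term of the final series -/
noncomputable def Gterm (n m k : ℕ) : ℝ :=
  (2*k+3*n+2) * (k+3*n+1).factorial / k.factorial *
    (((n+k).factorial : ℝ) / (2*n+1+k).factorial)^3 * ((-1)^k * bet n k)^m

/-- double series -/
noncomputable def Fterm (n m k i : ℕ) : ℝ :=
  ((k+i+n).choose n : ℝ) * bet n (k+i) * (((-1)^k * bet n k)^m * Acoef n k i)

theorem bet_nonneg (n k : ℕ) : 0 ≤ bet n k := by unfold bet; positivity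

theorem Fterm_sum (n m k : ℕ) : HasSum (Fterm n m k) (Gterm n m k) := by
  have h := (gauss_sum (n+k) n).mul_left
    (((-1)^k * bet n k)^m * ((n+k).factorial * (2*k+3*n+2) * (k+3*n+1).factorial / (n.factorial * k.factorial * (k+2*n+1).factorial)))
  refine hs_congr h (fun i => ?_) ?_
  · unfold Fterm Acoef
    rw [Nat.add_choose, Nat.cast_div (Nat.factorial_mul_factorial_dvd_factorial_add _ _) (by positivity),
      show 2*(n+k)+n+2+i = 3*n+2+(k+i)+k by ring, show n+k+i = k+i+n by ring]
    rw [show bet n (k+i) = n.factorial * (k+i+n).factorial / (2*n+1+(k+i)).factorial by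
      rw [bet, add_comm n (k+i)]]
    push_cast
    field_simp
  · unfold Gterm
    rw [show n+k+n+1 = 2*n+1+k by ring, show k+2*n+1=2*n+1+k by ring]
    field_simp

theorem Fterm_abs (n m k i : ℕ) : |Fterm n m k i| = (-1)^(k*m) * Fterm n m k i := by
  have h : (-1:ℝ)^(k*m) * Fterm n m k i = ((k+i+n).choose n : ℝ) * bet n (k+i) * ((bet n k)^m * Acoef n k i) := by
    unfold Fterm
    rw [mul_pow, ← pow_mul]
    have : (-1:ℝ)^(k*m) * (-1:ℝ)^(k*m) = 1 := by rw [← mul_pow]; simp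
    linear_combination (((k+i+n).choose n : ℝ) * bet n (k+i) * ((bet n k)^m * Acoef n k i)) * this
  have h1 := bet_nonneg n k
  have h2 := bet_nonneg n (k+i)
  have h3 : 0 ≤ Acoef n k i := by unfold Acoef; positivity
  have hp : 0 ≤ (-1:ℝ)^(k*m) * Fterm n m k i := by rw [h]; positivity
  rw [← abs_of_nonneg hp, abs_mul]; simp

theorem ratio_bound (n k : ℕ) : ((n+k).factorial : ℝ) / (2*n+1+k).factorial ≤ 1 / ((k+n+1:ℕ):ℝ)^(n+1) := by
  have h := Nat.factorial_mul_pow_le_factorial (m := n+k) (n := n+1)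
  rw [show n+k+(n+1) = 2*n+1+k by ring] at h
  rw [div_le_div_iff₀ (by positivity) (by positivity), one_mul]
  rw [show k+n+1 = n+k+1 by ring]
  exact_mod_cast h

theorem fact_bound (n k : ℕ) : ((k+3*n+1).factorial : ℝ) / k.factorial ≤ (3*((k+n+1:ℕ):ℝ))^(3*n+1) := by
  rw [div_le_iff₀ (by positivity)]
  have h := Nat.factorial_mul_pow_sub_le_factorial (n := k) (m := k+3*n+1)
  have h2 : (k+3*n+1).factorial ≤ k.factorial * (k+3*n+1)^(3*n+1) := by
    have := Nat.factorial_mul_ascFactorial k (3*n+1)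
    rw [add_assoc, ← this]
    exact Nat.mul_le_mul_left _ (by
      have := Nat.ascFactorial_le_pow_add k (3*n+1)
      simpa [add_assoc] using this)
  calc ((k+3*n+1).factorial : ℝ) ≤ k.factorial * ((k+3*n+1:ℕ):ℝ)^(3*n+1) := by exact_mod_cast h2
    _ ≤ k.factorial * (3*((k+n+1:ℕ):ℝ))^(3*n+1) := by
      gcongr; push_cast; linarith [show (0:ℝ) ≤ k by positivity]
    _ = _ := by ring

theorem Gterm_summable (n m : ℕ) (hm : 1 ≤ m) : Summable (fun k => |Gterm n m k|) := by
  have hs : Summable (fun k : ℕ => (3:ℝ)^(3*n+2) * (n.factorial:ℝ)^m * (1 / ((k+n+1:ℕ):ℝ)^2)) := by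
    apply Summable.mul_left
    have := (summable_nat_add_iff (f := fun k : ℕ => 1/((k:ℕ):ℝ)^2) (n+1)).mpr
      (Real.summable_one_div_nat_pow.mpr (by norm_num))
    exact this
  refine Summable.of_nonneg_of_le (fun _ => abs_nonneg _) (fun k => ?_) hs
  have hb := bet_nonneg n k
  have habs : |Gterm n m k| = (2*k+3*n+2) * ((k+3*n+1).factorial / k.factorial) *
    (((n+k).factorial : ℝ) / (2*n+1+k).factorial)^3 * (bet n k)^m := by
    unfold Gterm
    rw [abs_mul, abs_pow ((-1)^k * bet n k), abs_mul ((-1)^k), abs_pow, abs_of_nonneg hb, abs_of_nonneg (by positivity)]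
    simp only [abs_neg, abs_one, one_pow, one_mul]; ring
  have hbet : bet n k = n.factorial * (((n+k).factorial : ℝ) / (2*n+1+k).factorial) := by
    unfold bet; ring
  rw [habs, hbet, mul_pow]
  set r := ((n+k).factorial : ℝ) / (2*n+1+k).factorial with hr
  set X := ((k+n+1:ℕ):ℝ) with hX
  have hX1 : 1 ≤ X := by rw [hX]; push_cast; linarith [show (0:ℝ) ≤ k by positivity, show (0:ℝ) ≤ n by positivity]
  have hXp : 0 < X := by linarith
  have hr0 : 0 ≤ r := by positivity
  have hrb : r ≤ 1 / X^(n+1) := ratio_bound n k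
  have hr1 : r ≤ 1 / X := hrb.trans (by
    apply one_div_le_one_div_of_le hXp
    exact le_self_pow₀ hX1 (by omega))
  have hrm : r^m ≤ 1/X := by
    obtain ⟨q, rfl⟩ := Nat.exists_eq_add_of_le hm
    rw [pow_add, pow_one]
    have : r ≤ 1 := hr1.trans (by rw [div_le_one hXp]; exact hX1)
    have := pow_le_one₀ hr0 this (n := q)
    nlinarith
  have h2 : (2*k+3*n+2 : ℝ) ≤ 3 * X := by rw [hX]; push_cast; linarith [show (0:ℝ) ≤ k by positivity]
  have hf := fact_bound n k
  rw [← hX] at hf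
  calc (2*k+3*n+2) * ((k+3*n+1).factorial / k.factorial) * r^3 * ((n.factorial:ℝ)^m * r^m)
      ≤ (3*X) * (3*X)^(3*n+1) * (1/X^(n+1))^3 * ((n.factorial:ℝ)^m * (1/X)) := by gcongr
    _ = _ := by
      rw [mul_pow, div_pow, ← pow_mul, show (n+1)*3 = (3*n+1) + 2 by ring, pow_add X (3*n+1) 2]
      field_simp
      ring

theorem series_main (n m : ℕ) (hm : 1 ≤ m) :
    HasSum (fun j => ((j+n).choose n : ℝ) * (bet n j * Mom n m j)) (∑' k, Gterm n m k) := by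
  have hsum : Summable (fun p : ℕ × ℕ => Fterm n m p.1 p.2) := by
    apply Summable.of_abs
    rw [summable_prod_of_nonneg (fun _ => abs_nonneg _)]
    have h : ∀ k, HasSum (fun i => |Fterm n m k i|) ((-1)^(k*m) * Gterm n m k) := by
      intro k
      simp_rw [Fterm_abs]
      exact (Fterm_sum n m k).mul_left _
    refine ⟨fun k => (h k).summable, ?_⟩
    have h2 : (fun k => ∑' i, |Fterm n m k i|) = fun k => |Gterm n m k| := by
      ext k
      have h0 : 0 ≤ ∑' i, |Fterm n m k i| := tsum_nonneg fun _ => abs_nonneg _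
      rw [(h k).tsum_eq] at h0 ⊢
      rw [← abs_of_nonneg h0, abs_mul]; simp
    show Summable (fun k => ∑' i, |Fterm n m k i|)
    rw [h2]
    exact Gterm_summable n m hm
  have h1 : HasSum (fun p : ℕ × ℕ => Fterm n m p.1 p.2) (∑' k, Gterm n m k) := by
    have := hsum.hasSum
    have h3 := this.prod_fiberwise (fun k => Fterm_sum n m k)
    rw [h3.tsum_eq]; exact this
  have h4 := (Finset.HasAntidiagonal.sigmaAntidiagonalEquivProd (A := ℕ)).hasSum_iff.mpr h1
  have h5 := h4.sigma (fun j => hasSum_fintype _)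
  refine hs_congr h5 (fun j => ?_) rfl
  rw [Mom_spec, Finset.mul_sum, Finset.mul_sum]
  rw [← Finset.Nat.sum_antidiagonal_eq_sum_range_succ (fun k i => ((j+n).choose n : ℝ) * (bet n j * (((-1)^k * bet n k)^m * Acoef n k i)))]
  rw [← Finset.sum_coe_sort]
  refine Finset.sum_congr rfl fun p _ => ?_
  have hp := Finset.HasAntidiagonal.mem_antidiagonal.mp p.2
  simp only [Function.comp, Finset.HasAntidiagonal.sigmaAntidiagonalEquivProd_apply, Fterm]
  rw [hp]; ring

theorem integral_main (n m : ℕ) (hm : 1 ≤ m) :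
    ∫ x, Wt n (m+1) x / (1 - nestR (List.ofFn fun i => x (Fin.succ i)) * x 0)^(n+1) ∂(cube (m+1))
      = ∑' k, Gterm n m k := by
  have hs := series_main n m hm
  have hae : ∀ᵐ x ∂(cube (m+1)), ∀ i, x i ∈ Set.Ioo (0:ℝ) 1 := by
    rw [cube_eq]
    filter_upwards [ae_restrict_mem (MeasurableSet.univ_pi fun _ => measurableSet_Ioo)] with x hx i
    exact hx i trivial
  have hI : ∀ j, ∫ x, ((j+n).choose n : ℝ) * (Wt n (m+1) x * (nestR (List.ofFn fun i => x (Fin.succ i)) * x 0)^j) ∂(cube (m+1))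
     = ((j+n).choose n : ℝ) * (bet n j * Mom n m j) := by
    intro j; rw [integral_const_mul, Mom_term]
  have h := hasSum_integral_of_summable_integral_norm (μ := cube (m+1))
    (F := fun (j : ℕ) (x : Fin (m+1) → ℝ) => ((j+n).choose n : ℝ) * (Wt n (m+1) x * (nestR (List.ofFn fun i => x (Fin.succ i)) * x 0)^j))
    (by
      intro j
      apply cube_int
      have := Wt_cont n (m+1)
      have := tail_cont m
      fun_prop)
    (by
      convert hs.summable using 1
      ext j
      rw [← hI]
      apply integral_congr_ae
      filter_upwards [hae] with x hx
      rw [Real.norm_eq_abs, abs_of_nonneg]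
      have h1 := Wt_nonneg n (m+1) x hx
      have h2 := (nestR_mem m (fun i => x i.succ) (fun i => hx _)).1
      have h3 := (hx 0).1.le
      positivity)
  simp_rw [hI] at h
  rw [← h.unique hs]
  apply integral_congr_ae
  filter_upwards [hae] with x hx
  have h2 := (nestR_mem m (fun i => x i.succ) (fun i => hx _))
  have h3 := hx 0
  have h4 : |nestR (List.ofFn fun i => x (Fin.succ i)) * x 0| < 1 := by
    rw [abs_of_nonneg (mul_nonneg h2.1 h3.1.le)]
    nlinarith [h2.1, h2.2, h3.1, h3.2]
  have := (hasSum_choose_mul_geometric_of_norm_lt_one n (r := nestR (List.ofFn fun i => x (Fin.succ i)) * x 0)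
      (by rwa [Real.norm_eq_abs])).mul_left (Wt n (m+1) x)
  rw [mul_one_div] at this
  rw [← this.tsum_eq]
  congr 1; ext j; ring

theorem poch_nat (a k : ℕ) : poch ((a:ℂ)+1) k = ((a+k).factorial : ℂ) / a.factorial := by
  unfold poch
  induction k with
  | zero =>
    have : (a.factorial : ℂ) ≠ 0 := by exact_mod_cast Nat.factorial_ne_zero a
    simp [this]
  | succ k ih =>
    rw [Finset.prod_range_succ, ih, ← add_assoc, Nat.factorial_succ]
    push_cast; ring

theorem poch_shift (x : ℂ) (k : ℕ) : poch (x+1) k * x = poch x k * (x + k) := by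
  unfold poch
  induction k with
  | zero => simp
  | succ k ih =>
    rw [Finset.prod_range_succ, Finset.prod_range_succ]
    push_cast
    linear_combination (x+1+k) * ih

theorem poch_ne (x : ℝ) (hx : 0 < x) (k : ℕ) : poch (x:ℂ) k ≠ 0 := by
  unfold poch
  rw [Finset.prod_ne_zero_iff]
  intro i _
  have : (0:ℝ) < x + i := by positivity
  have h2 := this.ne'
  exact_mod_cast h2

/-- Zudilin's identity for Vasilyev's integrals `J_{E,n}`. -/
theorem zudilin_vasilyev (n E : ℕ) (hE : 2 ≤ E) :
    Jint E (fun _ => (n : ℂ) + 1)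
        (fun _ => 2 * (n : ℂ) + 2) 1 =
      ((Nat.factorial n : ℂ) ^ (2*E+1) * (Nat.factorial (3*n+2) : ℂ) /
          (Nat.factorial (2*n+1) : ℂ) ^ (E+2)) *
        hyp ((3*(n:ℂ)+2) :: (3*(n:ℂ)/2 + 2) :: List.replicate (E+2) ((n:ℂ)+1))
          ((3*(n:ℂ)/2 + 1) :: List.replicate (E+2) (2*(n:ℂ)+2))
          ((-1) ^ (E+1)) := by
  obtain ⟨m, rfl⟩ : ∃ m, E = m+1 := ⟨E-1, by omega⟩
  have hm : 1 ≤ m := by omega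
  have hL : Jint (m+1) (fun _ => (n : ℂ) + 1) (fun _ => 2 * (n : ℂ) + 2) 1 = ((∑' k, Gterm n m k : ℝ) : ℂ) := by
    rw [← integral_main n m hm, ← integral_complex_ofReal, cube_eq]
    unfold Jint
    congr 1
    ext x
    unfold Wt
    have e1 : (n:ℂ)+1-1 = (n:ℂ) := by ring
    have e2 : 2*(n:ℂ)+2-((n:ℂ)+1)-1 = (n:ℂ) := by ring
    have e3 : (n:ℂ)+1 = ((n+1:ℕ):ℂ) := by push_cast; ring
    simp only [e1, e2]
    rw [e3]
    simp only [Complex.cpow_natCast, List.ofFn_succ, List.tail_cons, List.headI_cons, mul_one]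
    push_cast
    rfl
  rw [hL, Complex.ofReal_tsum]
  unfold hyp
  rw [← tsum_mul_left]
  congr 1
  ext k
  simp only [List.map_cons, List.prod_cons, List.map_replicate, List.prod_replicate]
  have p1 : poch (3*(n:ℂ)+2) k = ((3*n+1+k).factorial : ℂ) / (3*n+1).factorial := by
    rw [← poch_nat]; congr 1; push_cast; ring
  have p2 : poch (2*(n:ℂ)+2) k = ((2*n+1+k).factorial : ℂ) / (2*n+1).factorial := by
    rw [← poch_nat]; congr 1; push_cast; ring
  have hx : (3*(n:ℂ)/2+1) = ((3*(n:ℝ)/2+1 : ℝ) : ℂ) := by push_cast; ring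
  have p3 := poch_shift (3*(n:ℂ)/2+1) k
  have p4 : poch (3*(n:ℂ)/2+1) k ≠ 0 := by
    rw [hx]; exact poch_ne _ (by positivity) k
  have p5 : (3*(n:ℂ)+2) ≠ 0 := by
    have : 3*n+2 ≠ 0 := by omega
    exact_mod_cast this
  have p6 : poch (3*(n:ℂ)/2+2) k = poch (3*(n:ℂ)/2+1) k * ((2*k+3*n+2)/(3*n+2)) := by
    rw [show 3*(n:ℂ)/2+2 = 3*(n:ℂ)/2+1+1 by ring]
    rw [← mul_div_assoc, eq_div_iff p5]
    linear_combination 2 * p3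
  rw [p1, p2, p6, poch_nat]
  have f1 : ∀ a : ℕ, (a.factorial : ℂ) ≠ 0 := fun a => by exact_mod_cast Nat.factorial_ne_zero a
  have f2 : ((3*n+2).factorial : ℂ) = (3*n+2) * (3*n+1).factorial := by
    rw [show 3*n+2=3*n+1+1 by ring, Nat.factorial_succ]; push_cast; ring
  have sg : ((-1:ℂ)^(m+1+1))^k = ((-1)^k)^m := by
    rw [show m+1+1 = m+2 by ring, pow_add, neg_one_sq, mul_one, ← pow_mul, ← pow_mul, mul_comm]
  rw [f2, sg]
  unfold Gterm bet
  rw [show k+3*n+1 = 3*n+1+k by ring]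
  push_cast
  have g1 := f1 n
  have g2 := f1 (3*n+1)
  have g3 := f1 (2*n+1)
  have g4 := f1 (2*n+1+k)
  have g5 := f1 k
  generalize poch (3*(n:ℂ)/2+1) k = P at *
  simp only [mul_pow, div_pow, show 2*(m+1)+1 = m + 3 + m by ring, show m+1+2 = m+3 by ring, pow_add _ (m+3) m]
  simp only [pow_add _ m 3]
  field_simp
end
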